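/- arXiv:1804.05637 — 2 statements merged into one kernel-verified Lean document; each statement's English description precedes it below -/
import Mathlib

section
/- Let M be a 3-connected matroid and let C* be a 4-element cocircuit of M. If there are two distinct elements of C* neither of which is contained in a triangle of M, then there exists c ∈ C* such that M/c is 3-connected. -/
open Set Matroid

variable {α β : Type*}

namespace NDP

/-- The rank of a set `X` in a matroid `M`: the largest cardinality of an
independent subset of `X` (intended for finite matroids). -/
noncomputable def rk (M : Matroid α) (X : Set α) : ℕ :=
  sSup {n : ℕ | ∃ I, M.Indep I ∧ I ⊆ X ∧ I.ncard = n}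

/-- The connectivity function `λ_M(X) = r(X) + r(E − X) − r(M)`, valued in `ℤ`. -/
noncomputable def lam (M : Matroid α) (X : Set α) : ℤ :=
  (rk M X : ℤ) + (rk M (M.E \ X) : ℤ) - (rk M M.E : ℤ)

/-- Deletion of a set of elements. -/
def delete (M : Matroid α) (D : Set α) : Matroid α := M ↾ (M.E \ D)

/-- Contraction of a set of elements, defined by duality. -/
def contract (M : Matroid α) (C : Set α) : Matroid α := (delete M✶ C)✶

/-- `X` is a `k`-separating set of `M`. -/
def Separating (M : Matroid α) (k : ℕ) (X : Set α) : Prop :=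
  X ⊆ M.E ∧ lam M X ≤ (k : ℤ) - 1

/-- `X` is exactly `k`-separating in `M`. -/
def ExactlySeparating (M : Matroid α) (k : ℕ) (X : Set α) : Prop :=
  X ⊆ M.E ∧ lam M X = (k : ℤ) - 1

/-- `(X, M.E \ X)` is a `k`-separation of `M`. -/
def IsKSeparation (M : Matroid α) (k : ℕ) (X : Set α) : Prop :=
  Separating M k X ∧ k ≤ X.ncard ∧ k ≤ (M.E \ X).ncard

/-- A matroid is connected if it has no 1-separations. -/
def Connected (M : Matroid α) : Prop := ∀ X, ¬ IsKSeparation M 1 X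

/-- A matroid is 3-connected if it has no k-separations for k < 3. -/
def ThreeConnected (M : Matroid α) : Prop := ∀ k < 3, ∀ X, ¬ IsKSeparation M k X

/-- A circuit: a minimal dependent set. -/
def Circuit (M : Matroid α) (C : Set α) : Prop :=
  C ⊆ M.E ∧ ¬ M.Indep C ∧ ∀ D, D ⊂ C → M.Indep D

def Cocircuit (M : Matroid α) (C : Set α) : Prop := Circuit M✶ C

def Triangle (M : Matroid α) (T : Set α) : Prop := Circuit M T ∧ T.ncard = 3

def Triad (M : Matroid α) (T : Set α) : Prop := Cocircuit M T ∧ T.ncard = 3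

/-- `N` is a minor of `M`. -/
def Minor (N M : Matroid α) : Prop := ∃ C D, N = delete (contract M C) D

/-- `M` has a minor isomorphic to `N`. -/
def IsoMinor (M : Matroid α) (N : Matroid β) : Prop :=
  ∃ (f : β → α) (hf : Set.InjOn f N.E), Minor (N.map f hf) M

/-- `X` is a set of representatives for the simplification of `M`:
one non-loop element from each parallel class. -/
def SimpRep (M : Matroid α) (X : Set α) : Prop :=
  X ⊆ M.E ∧ (∀ e ∈ X, M.Indep {e}) ∧
  (∀ e ∈ M.E, M.Indep {e} → ∃ f ∈ X, f ∈ M.closure {e}) ∧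
  (∀ f ∈ X, ∀ g ∈ X, f ∈ M.closure {g} → f = g)

/-- `si M` (the simplification of `M`) is a 3-connected matroid. -/
def SiThreeConnected (M : Matroid α) : Prop :=
  ∀ X, SimpRep M X → ThreeConnected (M ↾ X)

/-- `co M` (the cosimplification of `M`) is a 3-connected matroid. -/
def CoThreeConnected (M : Matroid α) : Prop := SiThreeConnected M✶

/-- The restriction of `M` to `P` is isomorphic to the rank-`r` uniform matroid on `P`. -/
def UnifRestr (M : Matroid α) (r : ℕ) (P : Set α) : Prop :=
  P ⊆ M.E ∧ ∀ X ⊆ P, (M.Indep X ↔ X.ncard ≤ r)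

/-- A set is fully closed if it is closed in `M` and in `M✶`. -/
def FullClosed (M : Matroid α) (F : Set α) : Prop :=
  M.closure F = F ∧ M✶.closure F = F

/-- The full closure of `X`: the intersection of all fully closed sets containing `X`. -/
def fcl (M : Matroid α) (X : Set α) : Set α :=
  ⋂₀ {F | X ⊆ F ∧ FullClosed M F}

/-- `(X, {z}, Y)` is a vertical 3-separation of `M`. -/
def VertThreeSep (M : Matroid α) (X : Set α) (z : α) (Y : Set α) : Prop :=
  X ∪ {z} ∪ Y = M.E ∧ Disjoint X Y ∧ z ∉ X ∧ z ∉ Y ∧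
  IsKSeparation M 3 (X ∪ {z}) ∧ 3 ≤ rk M (X ∪ {z}) ∧ 3 ≤ rk M Y ∧
  IsKSeparation M 3 X ∧ 3 ≤ rk M X ∧ 3 ≤ rk M (Y ∪ {z}) ∧
  z ∈ M.closure X ∧ z ∈ M.closure Y

/-- `M` is a wheel or a whirl: its ground set has a cyclic ordering of alternating
spokes and rims in which consecutive triples are alternately triangles and triads. -/
def IsWheelOrWhirl (M : Matroid α) : Prop :=
  ∃ (n : ℕ) (s r : ZMod n → α), 2 ≤ n ∧
    Function.Injective (fun p : ZMod n × Bool => if p.2 then s p.1 else r p.1) ∧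
    Set.range s ∪ Set.range r = M.E ∧
    ∀ i : ZMod n, Triangle M {s i, r i, s (i + 1)} ∧ Triad M {r i, s (i + 1), r (i + 1)}

/-- `f` (restricted to `{0, …, k−1}`) is a fan ordering of length `k` in `M`. -/
def IsFanOrd (M : Matroid α) (k : ℕ) (f : ℕ → α) : Prop :=
  3 ≤ k ∧ Set.InjOn f (Set.Iio k) ∧ (∀ i < k, f i ∈ M.E) ∧
  (Triangle M {f 0, f 1, f 2} ∨ Triad M {f 0, f 1, f 2}) ∧
  ∀ i, i + 3 < k →
    (Triangle M {f i, f (i+1), f (i+2)} → Triad M {f (i+1), f (i+2), f (i+3)}) ∧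
    (Triad M {f i, f (i+1), f (i+2)} → Triangle M {f (i+1), f (i+2), f (i+3)})

/-- `F` is a fan of `M`. -/
def IsFan (M : Matroid α) (F : Set α) : Prop :=
  ∃ k f, IsFanOrd M k f ∧ F = f '' Set.Iio k

/-- `F` is a maximal fan of `M`. -/
def IsMaximalFan (M : Matroid α) (F : Set α) : Prop :=
  IsFan M F ∧ ∀ F', IsFan M F' → F ⊆ F' → F' = F

end NDP

/-- Basic properties of the rank function of a 3-connected matroid. -/
structure NDPRank (r : Set α → ℕ) (E : Set α) : Prop where
  mono : ∀ X Y, X ⊆ Y → r X ≤ r Y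
  sub : ∀ X Y, r (X ∪ Y) + r (X ∩ Y) ≤ r X + r Y
  small : ∀ X : Set α, ¬ X.Nontrivial → r X ≤ 1
  sep : ∀ X Y : Set α, X ∪ Y = E → Disjoint X Y → X.Nontrivial → Y.Nontrivial →
    r E + 2 ≤ r X + r Y

/-- `(X, z, Y)` corresponds to a 2-separation of `M / z`. -/
structure NDPSep (r : Set α → ℕ) (E : Set α) (z : α) (X Y : Set α) : Prop where
  un : insert z (X ∪ Y) = E
  dj : Disjoint X Y
  zX : z ∉ X
  zY : z ∉ Y
  clX : r (insert z X) = r X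
  clY : r (insert z Y) = r Y
  rk : r X + r Y = r E + 2
  ntX : X.Nontrivial
  ntY : Y.Nontrivial

theorem NDPSep.symm {r : Set α → ℕ} {E : Set α} {z : α} {X Y : Set α}
    (h : NDPSep r E z X Y) : NDPSep r E z Y X :=
  ⟨by rw [Set.union_comm]; exact h.un, h.dj.symm, h.zY, h.zX, h.clY, h.clX,
    by rw [add_comm]; exact h.rk, h.ntY, h.ntX⟩

namespace NDPRank

variable {r : Set α → ℕ} {E : Set α}

theorem union_le (hr : NDPRank r E) (X Y : Set α) : r (X ∪ Y) ≤ r X + r Y := by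
  have := hr.sub X Y; omega

theorem single_le (hr : NDPRank r E) (e : α) : r {e} ≤ 1 := hr.small _ (by simp)

theorem insert_le (hr : NDPRank r E) (e : α) (X : Set α) : r (insert e X) ≤ r X + 1 := by
  have h1 := hr.union_le {e} X
  have h2 := hr.single_le e
  rw [Set.singleton_union] at h1
  omega

theorem diff_ge (hr : NDPRank r E) (e : α) (X : Set α) : r X ≤ r (X \ {e}) + 1 := by
  have h1 := hr.insert_le e (X \ {e})
  have h2 := hr.mono X (insert e (X \ {e})) (by intro x; by_cases x = e <;> simp_all)
  omega

theorem nontriv (hr : NDPRank r E) {X : Set α} (h : 2 ≤ r X) : X.Nontrivial := by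
  by_contra hc
  have := hr.small X hc
  omega

/-- closure is monotone -/
theorem cl_mono (hr : NDPRank r E) {X Y : Set α} (h : X ⊆ Y) (e : α)
    (he : r (insert e X) = r X) : r (insert e Y) = r Y := by
  have h1 := hr.sub (insert e X) Y
  have h2 := hr.mono X (insert e X ∩ Y) (fun x hx => ⟨Or.inr hx, h hx⟩)
  have h3 : insert e X ∪ Y = insert e Y := by
    rw [Set.insert_union, Set.union_eq_self_of_subset_left h]
  rw [h3] at h1
  have := hr.mono Y (insert e Y) (Set.subset_insert _ _)
  omega

theorem ncl_anti (hr : NDPRank r E) {X Y : Set α} (h : X ⊆ Y) (e : α)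
    (he : r Y + 1 ≤ r (insert e Y)) : r X + 1 ≤ r (insert e X) := by
  by_contra hc
  have := hr.cl_mono h e (le_antisymm (by omega) (hr.mono _ _ (Set.subset_insert _ _)))
  omega

/-- Uncrossing. -/
theorem uncross (hr : NDPRank r E) {b : α} {X1 Y1 X2 Y2 : Set α}
    (hE : X1 ∪ Y1 = E) (hd : Disjoint X1 Y1) (h1 : r X1 + r Y1 = r E + 2)
    (h2 : NDPSep r E b X2 Y2) (hb : b ∈ X1)
    (hn : r (X1 ∩ X2) + 1 ≤ r (insert b (X1 ∩ X2)))
    (nt1 : (Y1 ∩ Y2).Nontrivial) (nt2 : (X1 ∩ X2).Nontrivial) : False := by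
  have hbY : b ∉ Y1 := fun h => (Set.disjoint_left.1 hd) hb h
  have hd1 := Set.disjoint_left.1 hd
  have hd2 := Set.disjoint_left.1 h2.dj
  have hm1 : ∀ x, x ∈ E ↔ (x ∈ X1 ∨ x ∈ Y1) := by intro x; rw [← hE]; rfl
  have hm2 : ∀ x, x ∈ E ↔ (x = b ∨ x ∈ X2 ∨ x ∈ Y2) := by intro x; rw [← h2.un]; rfl
  have hzX := h2.zX
  have hzY := h2.zY
  have s1 := hr.sub X1 (insert b X2)
  have s2 := hr.sub Y1 Y2
  have e1 : X1 ∩ insert b X2 = insert b (X1 ∩ X2) := by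
    ext x; simp only [Set.mem_inter_iff, Set.mem_insert_iff]; grind
  have e2 : r (insert b (Y1 ∪ Y2)) = r (Y1 ∪ Y2) := hr.cl_mono Set.subset_union_right b h2.clY
  have l1 := hr.sep (X1 ∩ X2) (insert b (Y1 ∪ Y2))
    (by ext x; simp only [Set.mem_inter_iff, Set.mem_insert_iff, Set.mem_union]; grind)
    (by rw [Set.disjoint_left]; intro x
        simp only [Set.mem_inter_iff, Set.mem_insert_iff, Set.mem_union]; grind)
    nt2 (nt1.mono (fun x hx => Or.inr (Or.inl hx.1)))
  have l2 := hr.sep (X1 ∪ insert b X2) (Y1 ∩ Y2)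
    (by ext x; simp only [Set.mem_inter_iff, Set.mem_insert_iff, Set.mem_union]; grind)
    (by rw [Set.disjoint_left]; intro x
        simp only [Set.mem_inter_iff, Set.mem_insert_iff, Set.mem_union]; grind)
    (nt2.mono (fun x hx => Or.inl hx.1)) nt1
  have := h2.clX
  have := h2.rk
  rw [e1] at s1
  omega

theorem lemA' (hr : NDPRank r E) {a b : α} {X1 Y1 X2 Y2 : Set α}
    (h1 : NDPSep r E a X1 Y1) (h2 : NDPSep r E b X2 Y2)
    (ha : ∀ Z : Set α, Z.Nontrivial → Z ⊆ E → a ∉ Z → 3 ≤ r (insert a Z))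
    (hb : ∀ Z : Set α, Z.Nontrivial → Z ⊆ E → b ∉ Z → 3 ≤ r (insert b Z))
    (hbX : b ∈ X1) (haY : a ∈ Y2)
    (hq : ∀ Z, Z ⊆ X1 \ {b} → r Z + 1 ≤ r (insert b Z)) : False := by
  have hd1 := Set.disjoint_left.1 h1.dj
  have hd2 := Set.disjoint_left.1 h2.dj
  have hm1 : ∀ x, x ∈ E ↔ (x = a ∨ x ∈ X1 ∨ x ∈ Y1) := by intro x; rw [← h1.un]; rfl
  have hm2 : ∀ x, x ∈ E ↔ (x = b ∨ x ∈ X2 ∨ x ∈ Y2) := by intro x; rw [← h2.un]; rfl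
  have hz1 := h1.zX
  have hz2 := h1.zY
  have hz3 := h2.zX
  have hz4 := h2.zY
  have c1 := h1.clX
  have c2 := h1.clY
  have c3 := h2.clX
  have c4 := h2.clY
  have k1 := h1.rk
  have k2 := h2.rk
  have r1 : 3 ≤ r X1 := by
    rw [← c1]; exact ha _ h1.ntX (fun x hx => (hm1 x).2 (by tauto)) hz1
  have r2 : 3 ≤ r Y1 := by
    rw [← c2]; exact ha _ h1.ntY (fun x hx => (hm1 x).2 (by tauto)) hz2
  have r3 : 3 ≤ r X2 := by
    rw [← c3]; exact hb _ h2.ntX (fun x hx => (hm2 x).2 (by tauto)) hz3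
  have r4 : 3 ≤ r Y2 := by
    rw [← c4]; exact hb _ h2.ntY (fun x hx => (hm2 x).2 (by tauto)) hz4
  have hE : X1 ∪ insert a Y1 = E := by
    ext x; simp only [Set.mem_insert_iff, Set.mem_union]; grind
  have hD : Disjoint X1 (insert a Y1) := by
    rw [Set.disjoint_left]; intro x; simp only [Set.mem_insert_iff]; grind
  have hK : r X1 + r (insert a Y1) = r E + 2 := by omega
  have st1 : (Y1 ∩ Y2).Nonempty → ¬ (X1 ∩ X2).Nontrivial := by
    rintro ⟨y, hy1, hy2⟩ hnt
    refine hr.uncross hE hD hK h2 hbX (hq _ ?_) ?_ hnt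
    · rintro x ⟨hx1, hx2⟩
      exact ⟨hx1, by rintro rfl; exact hz3 hx2⟩
    · exact ⟨a, ⟨Or.inl rfl, haY⟩, y, ⟨Or.inr hy1, hy2⟩, by rintro rfl; exact hz2 hy1⟩
  have st2 : (Y1 ∩ X2).Nontrivial → ¬ (X1 ∩ Y2).Nontrivial := by
    intro hnt' hnt
    refine hr.uncross hE hD hK h2.symm hbX (hq _ ?_) ?_ hnt
    · rintro x ⟨hx1, hx2⟩
      exact ⟨hx1, by rintro rfl; exact hz4 hx2⟩
    · exact hnt'.mono (fun x hx => ⟨Or.inr hx.1, hx.2⟩)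
  have st3 : (Y1 ∩ Y2).Nonempty := by
    by_contra hc
    have hc' : ∀ y, y ∈ Y1 → y ∉ Y2 := fun y h h' => hc ⟨y, h, h'⟩
    refine st2 (h1.ntY.mono ?_) (hr.nontriv (X := Y2 \ {a}) ?_ |>.mono ?_)
    · intro x hx
      refine ⟨hx, ?_⟩
      grind
    · have := hr.diff_ge a Y2; omega
    · rintro x ⟨hx1, hx2⟩
      simp only [Set.mem_singleton_iff] at hx2
      simp only [Set.mem_inter_iff]
      grind
  have nX : ¬ (X1 ∩ X2).Nontrivial := st1 st3
  have nY : ¬ (X1 ∩ Y2).Nontrivial := by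
    apply st2
    apply hr.nontriv
    have u := hr.union_le (X1 ∩ X2) (Y1 ∩ X2)
    have m := hr.mono X2 (X1 ∩ X2 ∪ Y1 ∩ X2) (by
      intro x hx; simp only [Set.mem_inter_iff, Set.mem_union]; grind)
    have := hr.small _ nX
    omega
  have sX := hr.small _ nX
  have sY := hr.small _ nY
  have hX1 : X1 = insert b (X1 ∩ X2 ∪ X1 ∩ Y2) := by
    ext x; simp only [Set.mem_inter_iff, Set.mem_union, Set.mem_insert_iff]; grind
  have u1 := hr.insert_le b (X1 ∩ X2 ∪ X1 ∩ Y2)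
  have u2 := hr.union_le (X1 ∩ X2) (X1 ∩ Y2)
  rw [← hX1] at u1
  have r0 : r ∅ = 0 := by
    have := hq ∅ (Set.empty_subset _)
    have h' := hr.single_le b
    rw [LawfulSingleton.insert_empty_eq] at this
    omega
  obtain ⟨p, hp1, hp2⟩ : (X1 ∩ X2).Nonempty := by
    rw [Set.nonempty_iff_ne_empty]; intro h0; rw [h0] at u2 u1; omega
  obtain ⟨q, hq1, hq2⟩ : (X1 ∩ Y2).Nonempty := by
    rw [Set.nonempty_iff_ne_empty]; intro h0; rw [h0] at u2 u1; omega
  have hpu : ∀ x, x ∈ X1 → x ∈ X2 → x = p := by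
    intro x h h'
    by_contra hne
    exact nX ⟨x, ⟨h, h'⟩, p, ⟨hp1, hp2⟩, hne⟩
  have hqu : ∀ x, x ∈ X1 → x ∈ Y2 → x = q := by
    intro x h h'
    by_contra hne
    exact nY ⟨x, ⟨h, h'⟩, q, ⟨hq1, hq2⟩, hne⟩
  have hX1' : X1 = {b, p, q} := by
    ext x; simp only [Set.mem_insert_iff, Set.mem_singleton_iff]; grind
  have rX1 : r X1 = 3 := by omega
  have hpq : p ≠ q := by rintro rfl; exact hd2 hp2 hq2
  have hbp : b ≠ p := by rintro rfl; exact hz3 hp2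
  have hbq : b ≠ q := by rintro rfl; exact hz4 hq2
  have hab : a ≠ b := by rintro rfl; exact hz1 hbX
  -- the triad
  have t1 := hr.sep {p, q} (insert b (insert a Y1))
    (by ext x; simp only [Set.mem_insert_iff, Set.mem_singleton_iff, Set.mem_union]; grind)
    (by rw [Set.disjoint_left]; intro x
        simp only [Set.mem_insert_iff, Set.mem_singleton_iff]; grind)
    (Set.nontrivial_pair hpq)
    ⟨b, by simp, a, by simp, hab.symm⟩
  have t2 : r {p, q} ≤ 2 := by
    have := hr.insert_le p {q}
    have := hr.single_le q
    omega
  have t3 : r (insert a Y1) + 1 ≤ r (insert b (insert a Y1)) := by omega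
  -- the 4-circuit
  have f1 : 3 ≤ r (insert a {b, q}) := by
    apply ha _ (Set.nontrivial_pair hbq)
    · intro x hx
      simp only [Set.mem_insert_iff, Set.mem_singleton_iff] at hx
      grind
    · simp only [Set.mem_insert_iff, Set.mem_singleton_iff]; grind
  have f2 := hr.sub (insert a X1) (insert b Y2)
  have f3 := hr.mono (insert a {b, q}) (insert a X1 ∩ insert b Y2) (by
    intro x
    simp only [Set.mem_insert_iff, Set.mem_singleton_iff, Set.mem_inter_iff]; grind)
  have f4 := hr.mono (insert p (insert b Y2)) (insert a X1 ∪ insert b Y2) (by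
    intro x
    simp only [Set.mem_insert_iff, Set.mem_union]; grind)
  have f5 : r (insert p (insert b Y2)) ≤ r Y2 := by omega
  have f6 := hr.sep (X2 \ {p}) (insert p (insert b Y2))
    (by ext x; simp only [Set.mem_insert_iff, Set.mem_singleton_iff, Set.mem_union,
          Set.mem_sdiff]; grind)
    (by rw [Set.disjoint_left]; intro x
        simp only [Set.mem_insert_iff, Set.mem_singleton_iff, Set.mem_sdiff]; grind)
    (hr.nontriv (by have := hr.diff_ge p X2; omega))
    (h2.ntY.mono (fun x hx => Or.inr (Or.inr hx)))
  have f7 := hr.ncl_anti (X := X2 \ {p}) (Y := insert a Y1) (by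
    intro x
    simp only [Set.mem_insert_iff, Set.mem_singleton_iff, Set.mem_sdiff]; grind) b t3
  have f8 := hr.mono (insert b (X2 \ {p})) (insert b X2)
    (Set.insert_subset_insert Set.sdiff_subset)
  omega

theorem lemA (hr : NDPRank r E) {a b : α} {X1 Y1 X2 Y2 : Set α}
    (h1 : NDPSep r E a X1 Y1) (h2 : NDPSep r E b X2 Y2)
    (ha : ∀ Z : Set α, Z.Nontrivial → Z ⊆ E → a ∉ Z → 3 ≤ r (insert a Z))
    (hb : ∀ Z : Set α, Z.Nontrivial → Z ⊆ E → b ∉ Z → 3 ≤ r (insert b Z))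
    (hbX : b ∈ X1)
    (hq : ∀ Z, Z ⊆ X1 \ {b} → r Z + 1 ≤ r (insert b Z)) : False := by
  have haE : a ∈ E := by rw [← h1.un]; simp
  have hab : a ≠ b := by rintro rfl; exact h1.zX hbX
  rw [← h2.un] at haE
  rcases haE with h | h | h
  · exact hab h
  · exact hr.lemA' h1 h2.symm ha hb hbX h hq
  · exact hr.lemA' h1 h2 ha hb hbX h hq

/-- no triangle through `a`, in terms of rank -/
def NoTri (r : Set α → ℕ) (E : Set α) (a : α) : Prop :=
  ∀ Z : Set α, Z.Nontrivial → Z ⊆ E → a ∉ Z → 3 ≤ r (insert a Z)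

theorem lemB (hr : NDPRank r E) {a b c d : α} {X1 Y1 : Set α}
    (hcb : c ≠ b) (hdb : d ≠ b) (hda : d ≠ a) (hdc : d ≠ c)
    (hdE : d ∈ E)
    (hC : ∀ x ∈ ({a, b, c, d} : Set α), ∀ Z, Z ⊆ E → Disjoint Z {a, b, c, d} →
      r Z + 1 ≤ r (insert x Z))
    (hns : ∀ x ∈ ({a, b, c, d} : Set α), ∃ X Y, NDPSep r E x X Y)
    (ha : NoTri r E a) (hb : NoTri r E b)
    (hc : ¬ NoTri r E c → ∃ e f, e ∈ E ∧ f ∈ E ∧ c ≠ e ∧ c ≠ f ∧ e ≠ f ∧ e ≠ a ∧ f ≠ a ∧ e ≠ b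
      ∧ f ≠ b ∧ r {c, e, f} = 2 ∧ r {e, f} = 2 ∧ r {c, e} = 2 ∧ r {c, f} = 2)
    (h1 : NDPSep r E a X1 Y1) (hcX : c ∈ X1) (hbX : b ∈ Y1) (hdX : d ∈ Y1) : False := by
  have hd1 := Set.disjoint_left.1 h1.dj
  have hm1 : ∀ x, x ∈ E ↔ (x = a ∨ x ∈ X1 ∨ x ∈ Y1) := by intro x; rw [← h1.un]; rfl
  have hz1 := h1.zX
  have hz2 := h1.zY
  have c1 := h1.clX
  have c2 := h1.clY
  have k1 := h1.rk
  have r1 : 3 ≤ r X1 := by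
    rw [← c1]; exact ha _ h1.ntX (fun x hx => (hm1 x).2 (by tauto)) hz1
  have r2 : 3 ≤ r Y1 := by
    rw [← c2]; exact ha _ h1.ntY (fun x hx => (hm1 x).2 (by tauto)) hz2
  have hqc : ∀ Z, Z ⊆ X1 \ {c} → r Z + 1 ≤ r (insert c Z) := by
    intro Z hZ
    refine hC c (by simp) Z (fun x hx => (hm1 x).2 (Or.inr (Or.inl (hZ hx).1))) ?_
    rw [Set.disjoint_left]
    intro x hx
    have := hZ hx
    simp only [Set.mem_sdiff, Set.mem_singleton_iff, Set.mem_insert_iff] at *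
    grind
  obtain ⟨e, heE, hec, hed, hea, heb, t1, t2, t3⟩ : ∃ e, e ∈ E ∧ e ≠ c ∧ e ≠ d ∧ e ≠ a ∧ e ≠ b ∧
      r {c, d, e} = 2 ∧ r {d, e} = 2 ∧ r {c, e} = 2 := by
    have hnc : ¬ NoTri r E c := by
      intro hnt
      obtain ⟨X2, Y2, h2⟩ := hns c (by simp)
      exact hr.lemA h1 h2 ha hnt hcX hqc
    obtain ⟨e, f, heE, hfE, hce, hcf, hef, hea, hfa, heb, hfb, t1, t2, t3, t4⟩ := hc hnc
    by_cases he : e = d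
    · subst he
      exact ⟨f, hfE, hcf.symm, hef.symm, hfa, hfb, t1, t2, t4⟩
    by_cases hf : f = d
    · subst hf
      refine ⟨e, heE, hce.symm, he, hea, heb, ?_, ?_, t3⟩
      · rw [Set.pair_comm]; exact t1
      · rw [Set.pair_comm]; exact t2
    exfalso
    have hef1 : ({e, f} : Set α) ⊆ E := by
      intro x; simp only [Set.mem_insert_iff, Set.mem_singleton_iff]; grind
    have hef2 : Disjoint ({e, f} : Set α) {a, b, c, d} := by
      rw [Set.disjoint_left]; intro x
      simp only [Set.mem_insert_iff, Set.mem_singleton_iff]; grind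
    have := hC c (by simp) {e, f} hef1 hef2
    omega
  have g1 := hr.sep (X1 \ {c}) (insert c (insert a Y1))
    (by ext x; simp only [Set.mem_insert_iff, Set.mem_singleton_iff, Set.mem_union,
          Set.mem_sdiff]; grind)
    (by rw [Set.disjoint_left]; intro x
        simp only [Set.mem_insert_iff, Set.mem_singleton_iff, Set.mem_sdiff]; grind)
    (hr.nontriv (by have := hr.diff_ge c X1; omega))
    (h1.ntY.mono (fun x hx => Or.inr (Or.inr hx)))
  have g2 := hqc (X1 \ {c}) le_rfl
  rw [Set.insert_sdiff_singleton, Set.insert_eq_of_mem hcX] at g2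
  have g3 := hr.ncl_anti (Set.subset_insert a Y1) c (by omega)
  have heX : e ∈ X1 := by
    by_contra heX
    have heY : e ∈ Y1 := by grind
    have hh : insert c ({d, e} : Set α) = {c, d, e} := rfl
    have := hr.cl_mono (X := {d, e}) (Y := Y1) (by
      intro x; simp only [Set.mem_insert_iff, Set.mem_singleton_iff]; grind) c (by omega)
    omega
  have g4 : r (insert d X1) = r X1 := by
    apply hr.cl_mono (X := {c, e})
    · intro x; simp only [Set.mem_insert_iff, Set.mem_singleton_iff]; grind
    · rw [Set.insert_comm]; omega
  have g5 : r (insert a (insert d X1)) = r (insert d X1) :=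
    hr.cl_mono (Set.subset_insert _ _) a c1
  have ntd : (Y1 \ {d}).Nontrivial := hr.nontriv (by have := hr.diff_ge d Y1; omega)
  have g6 := hr.sep (insert a (insert d X1)) (Y1 \ {d})
    (by ext x; simp only [Set.mem_insert_iff, Set.mem_singleton_iff, Set.mem_union,
          Set.mem_sdiff]; grind)
    (by rw [Set.disjoint_left]; intro x
        simp only [Set.mem_insert_iff, Set.mem_singleton_iff, Set.mem_sdiff]; grind)
    (h1.ntX.mono (fun x hx => Or.inr (Or.inr hx))) ntd
  have g7 := hr.mono (Y1 \ {d}) Y1 Set.sdiff_subset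
  have g8 := hr.mono (insert a (Y1 \ {d})) (insert a Y1)
    (Set.insert_subset_insert Set.sdiff_subset)
  have g9 := hr.mono (Y1 \ {d}) (insert a (Y1 \ {d})) (Set.subset_insert _ _)
  have hS : NDPSep r E a (Y1 \ {d}) (insert d X1) := by
    refine ⟨?_, ?_, ?_, ?_, ?_, g5, ?_, ntd, h1.ntX.mono (Set.subset_insert _ _)⟩
    · ext x; simp only [Set.mem_insert_iff, Set.mem_singleton_iff, Set.mem_union,
          Set.mem_sdiff]; grind
    · rw [Set.disjoint_left]; intro x
      simp only [Set.mem_insert_iff, Set.mem_singleton_iff, Set.mem_sdiff]; grind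
    · exact fun h => hz2 h.1
    · simp only [Set.mem_insert_iff]; grind
    · omega
    · omega
  obtain ⟨X2, Y2, h2⟩ := hns b (by simp)
  refine hr.lemA hS h2 ha hb ⟨hbX, hdb.symm⟩ ?_
  intro Z hZ
  refine hC b (by simp) Z (fun x hx => (hm1 x).2 (Or.inr (Or.inr (hZ hx).1.1))) ?_
  rw [Set.disjoint_left]
  intro x hx
  have := hZ hx
  simp only [Set.mem_sdiff, Set.mem_singleton_iff, Set.mem_insert_iff] at *
  grind

theorem main (hr : NDPRank r E) {a b c d : α}
    (hab : a ≠ b) (hac : a ≠ c) (had : a ≠ d) (hbc : b ≠ c) (hbd : b ≠ d) (hcd : c ≠ d)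
    (hCE : ({a, b, c, d} : Set α) ⊆ E)
    (hC : ∀ x ∈ ({a, b, c, d} : Set α), ∀ Z, Z ⊆ E → Disjoint Z {a, b, c, d} →
      r Z + 1 ≤ r (insert x Z))
    (hns : ∀ x ∈ ({a, b, c, d} : Set α), ∃ X Y, NDPSep r E x X Y)
    (ha : NoTri r E a) (hb : NoTri r E b)
    (hc : ∀ c, c ∈ E → ¬ NoTri r E c → ∃ e f, e ∈ E ∧ f ∈ E ∧ c ≠ e ∧ c ≠ f ∧ e ≠ f ∧
      r {c, e, f} = 2 ∧ r {e, f} = 2 ∧ r {c, e} = 2 ∧ r {c, f} = 2) : False := by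
  -- triangles avoid `a` and `b`
  have hc' : ∀ c, c ≠ a → c ≠ b → c ∈ E → ¬ NoTri r E c →
      ∃ e f, e ∈ E ∧ f ∈ E ∧ c ≠ e ∧ c ≠ f ∧ e ≠ f ∧ e ≠ a ∧ f ≠ a ∧ e ≠ b
      ∧ f ≠ b ∧ r {c, e, f} = 2 ∧ r {e, f} = 2 ∧ r {c, e} = 2 ∧ r {c, f} = 2 := by
    intro c hca hcb hcE hnt
    obtain ⟨e, f, heE, hfE, hce, hcf, hef, t1, t2, t3, t4⟩ := hc c hcE hnt
    have key1 : ∀ z, NoTri r E z → e ≠ z := by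
      rintro z hz rfl
      have := hz {c, f} (Set.nontrivial_pair hcf) (by
        intro x; simp only [Set.mem_insert_iff, Set.mem_singleton_iff]; grind) (by
        simp only [Set.mem_insert_iff, Set.mem_singleton_iff]; grind)
      rw [Set.insert_comm] at this
      omega
    have key2 : ∀ z, NoTri r E z → f ≠ z := by
      rintro z hz rfl
      have := hz {c, e} (Set.nontrivial_pair hce) (by
        intro x; simp only [Set.mem_insert_iff, Set.mem_singleton_iff]; grind) (by
        simp only [Set.mem_insert_iff, Set.mem_singleton_iff]; grind)
      rw [Set.insert_comm, Set.pair_comm] at this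
      omega
    exact ⟨e, f, heE, hfE, hce, hcf, hef, key1 a ha, key2 a ha, key1 b hb, key2 b hb,
      t1, t2, t3, t4⟩
  have hcE : c ∈ E := hCE (by simp)
  have hdE : d ∈ E := hCE (by simp)
  have hbE : b ∈ E := hCE (by simp)
  -- one may assume `b ∈ Y`
  obtain ⟨X, Y, hS, hbY⟩ : ∃ X Y, NDPSep r E a X Y ∧ b ∈ Y := by
    obtain ⟨X, Y, hS⟩ := hns a (by simp)
    have := hbE
    rw [← hS.un] at this
    rcases this with h | h | h
    · exact absurd h.symm hab
    · exact ⟨Y, X, hS.symm, h⟩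
    · exact ⟨X, Y, hS, h⟩
  have hd1 := Set.disjoint_left.1 hS.dj
  have hm1 : ∀ x, x ∈ E ↔ (x = a ∨ x ∈ X ∨ x ∈ Y) := by intro x; rw [← hS.un]; rfl
  have hzX := hS.zX
  have hzY := hS.zY
  by_cases hcX : c ∈ X
  · by_cases hdX : d ∈ X
    · obtain ⟨X2, Y2, h2⟩ := hns b (by simp)
      refine hr.lemA hS.symm h2 ha hb hbY ?_
      intro Z hZ
      refine hC b (by simp) Z (fun x hx => (hm1 x).2 (Or.inr (Or.inr (hZ hx).1))) ?_
      rw [Set.disjoint_left]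
      intro x hx
      have := hZ hx
      simp only [Set.mem_sdiff, Set.mem_singleton_iff, Set.mem_insert_iff] at *
      grind
    · exact hr.lemB hbc.symm hbd.symm had.symm hcd.symm hdE hC hns ha hb
        (hc' c hac.symm hbc.symm hcE) hS hcX hbY (by grind)
  · by_cases hdX : d ∈ X
    · have hh : ({a, b, c, d} : Set α) = {a, b, d, c} := by rw [Set.pair_comm c d]
      rw [hh] at hC hns
      exact hr.lemB hbd.symm hbc.symm hac.symm hcd hcE hC hns ha hb
        (hc' d had.symm hbd.symm hdE) hS hdX hbY (by grind)
    · -- `X` avoids the cocircuit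
      have h1 := hC a (by simp) X (fun x hx => (hm1 x).2 (Or.inr (Or.inl hx))) (by
        rw [Set.disjoint_left]
        intro x hx
        simp only [Set.mem_singleton_iff, Set.mem_insert_iff]
        grind)
      have := hS.clX
      omega

end NDPRank

namespace NDPRank

variable {r : Set α → ℕ} {E : Set α}

theorem pair_rk (hr : NDPRank r E) (hfin : E.Finite) (h4 : 4 ≤ E.ncard) {e f : α}
    (he : e ∈ E) (hf : f ∈ E) (hef : e ≠ f) : r {e, f} = 2 := by
  have hsub : ({e, f} : Set α) ⊆ E := by
    intro x; simp only [Set.mem_insert_iff, Set.mem_singleton_iff]; grind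
  have hnt : (E \ {e, f}).Nontrivial := by
    have h1 := Set.ncard_sdiff_add_ncard_of_subset hsub hfin
    rw [Set.ncard_pair hef] at h1
    exact (Set.one_lt_ncard_iff_nontrivial_and_finite.1 (by omega)).1
  have := hr.sep {e, f} (E \ {e, f}) (Set.union_sdiff_cancel hsub) Set.disjoint_sdiff_right
    (Set.nontrivial_pair hef) hnt
  have h2 := hr.mono (E \ {e, f}) E Set.sdiff_subset
  have h3 := hr.insert_le e {f}
  have h4 := hr.single_le f
  omega

theorem tri (hr : NDPRank r E) (hfin : E.Finite) (h4 : 4 ≤ E.ncard) {c : α} (hc : c ∈ E)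
    (h : ¬ NoTri r E c) : ∃ e f, e ∈ E ∧ f ∈ E ∧ c ≠ e ∧ c ≠ f ∧ e ≠ f ∧
      r {c, e, f} = 2 ∧ r {e, f} = 2 ∧ r {c, e} = 2 ∧ r {c, f} = 2 := by
  unfold NoTri at h
  push Not at h
  obtain ⟨Z, ⟨e, he, f, hf, hef⟩, hZE, hcZ, hlt⟩ := h
  have hce : c ≠ e := by rintro rfl; exact hcZ he
  have hcf : c ≠ f := by rintro rfl; exact hcZ hf
  have h1 := hr.mono {c, e, f} (insert c Z) (by
    intro x; simp only [Set.mem_insert_iff, Set.mem_singleton_iff]; grind)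
  have h2 := hr.pair_rk hfin h4 (hZE he) (hZE hf) hef
  have h3 := hr.mono {e, f} {c, e, f} (Set.subset_insert _ _)
  exact ⟨e, f, hZE he, hZE hf, hce, hcf, hef, by omega, h2,
    hr.pair_rk hfin h4 hc (hZE he) hce, hr.pair_rk hfin h4 hc (hZE hf) hcf⟩

theorem mkSep (hr : NDPRank r E) (hfin : E.Finite) (h4 : 4 ≤ E.ncard) {z : α} {X Y : Set α}
    (hz : 1 ≤ r {z})
    (hun : insert z (X ∪ Y) = E) (hdj : Disjoint X Y) (zX : z ∉ X) (zY : z ∉ Y) (k : ℕ)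
    (hk : k < 3) (hkX : k ≤ X.ncard) (hkY : k ≤ Y.ncard)
    (hrk : r (insert z X) + r (insert z Y) ≤ r E + k) : NDPSep r E z X Y := by
  have hd := Set.disjoint_left.1 hdj
  have hXE : X ⊆ E := by rw [← hun]; intro x hx; exact Or.inr (Or.inl hx)
  have hYE : Y ⊆ E := by rw [← hun]; intro x hx; exact Or.inr (Or.inr hx)
  have fX := hfin.subset hXE
  have fY := hfin.subset hYE
  have hcardE : E.ncard = X.ncard + Y.ncard + 1 := by
    rw [← hun, Set.ncard_insert_of_notMem (by rintro (h | h); exacts [zX h, zY h])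
      (fX.union fY), Set.ncard_union_eq hdj fX fY]
  have hm1 : ∀ x, x ∈ E ↔ (x = z ∨ x ∈ X ∨ x ∈ Y) := by intro x; rw [← hun]; rfl
  -- the two separations
  have sY : (insert z X).Nontrivial → Y.Nontrivial → r E + 2 ≤ r (insert z X) + r Y := by
    intro h1 h2
    refine hr.sep _ _ ?_ ?_ h1 h2
    · ext x; simp only [Set.mem_insert_iff, Set.mem_union]; grind
    · rw [Set.disjoint_left]; intro x; simp only [Set.mem_insert_iff]; grind
  have sX : (insert z Y).Nontrivial → X.Nontrivial → r E + 2 ≤ r (insert z Y) + r X := by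
    intro h1 h2
    refine hr.sep _ _ ?_ ?_ h1 h2
    · ext x; simp only [Set.mem_insert_iff, Set.mem_union]; grind
    · rw [Set.disjoint_left]; intro x; simp only [Set.mem_insert_iff]; grind
  have mX := hr.mono X _ (Set.subset_insert z X)
  have mY := hr.mono Y _ (Set.subset_insert z Y)
  have ntins : ∀ W : Set α, z ∉ W → 1 ≤ W.ncard → (insert z W).Nontrivial := by
    intro W hzW hW
    obtain ⟨w, hw⟩ := Set.nonempty_of_ncard_ne_zero (by omega : W.ncard ≠ 0)
    exact ⟨z, by simp, w, by simp [hw], by rintro rfl; exact hzW hw⟩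
  have nt : ∀ W : Set α, 2 ≤ W.ncard → W.Nontrivial := by
    intro W hW
    exact (Set.one_lt_ncard_iff_nontrivial_and_finite.1 (by omega)).1
  have hk0 : k ≠ 0 := by
    rintro rfl
    have := hr.sub (insert z X) (insert z Y)
    have h1 := hr.mono {z} (insert z X ∩ insert z Y) (by simp)
    have h2 : insert z X ∪ insert z Y = E := by
      ext x; simp only [Set.mem_insert_iff, Set.mem_union]; grind
    rw [h2] at this
    omega
  have hk1 : k ≠ 1 := by
    rintro rfl
    by_cases h : 2 ≤ Y.ncard
    · have := sY (ntins X zX hkX) (nt Y h); omega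
    · have := sX (ntins Y zY hkY) (nt X (by omega)); omega
  have hk2 : k = 2 := by omega
  subst hk2
  have a1 := sY (ntins X zX (by omega)) (nt Y hkY)
  have a2 := sX (ntins Y zY (by omega)) (nt X hkX)
  exact ⟨hun, hdj, zX, zY, by omega, by omega, by omega, nt X hkX, nt Y hkY⟩

end NDPRank

namespace NDP

theorem rk_eq (M : Matroid α) [M.Finite] (X : Set α) : ((rk M X : ℕ) : ℕ∞) = M.eRk X := by
  obtain ⟨I, hI⟩ := M.exists_isBasis' X
  have hfin : I.Finite := M.ground_finite.subset hI.indep.subset_ground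
  have hg : IsGreatest {n : ℕ | ∃ I, M.Indep I ∧ I ⊆ X ∧ I.ncard = n} I.ncard := by
    refine ⟨⟨I, hI.indep, hI.subset, rfl⟩, ?_⟩
    rintro n ⟨J, hJ, hJX, rfl⟩
    have h1 := hJ.encard_le_eRk_of_subset hJX
    have hJf : J.Finite := M.ground_finite.subset hJ.subset_ground
    rw [hI.eRk_eq_encard, ← hfin.cast_ncard_eq, ← hJf.cast_ncard_eq] at h1
    exact_mod_cast h1
  rw [rk, hg.csSup_eq, hI.eRk_eq_encard, hfin.cast_ncard_eq]

theorem contract_eq (M : Matroid α) (C : Set α) : contract M C = M ／ C := rfl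

theorem rk_contract (M : Matroid α) [M.Finite] {c : α} (hc : M.Indep {c}) {X : Set α}
    (hX : X ⊆ M.E \ {c}) : rk (contract M {c}) X + 1 = rk M (insert c X) := by
  rw [contract_eq]
  obtain ⟨J, hJ⟩ := (M ／ {c}).exists_isBasis X hX
  have h1 := hc.union_isBasis_union_of_contract_isBasis hJ
  have hcJ : c ∉ J := fun h => (hX (hJ.subset h)).2 rfl
  have e1 := rk_eq (M ／ {c}) X
  have e2 := rk_eq M (insert c X)
  rw [hJ.eRk_eq_encard] at e1
  rw [Set.union_singleton, Set.union_singleton] at h1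
  rw [h1.eRk_eq_encard, Set.encard_insert_of_notMem hcJ, ← e1] at e2
  exact_mod_cast e2.symm

theorem indep_of_rk (M : Matroid α) [M.Finite] {X : Set α} (hX : X.Finite)
    (h : X.ncard ≤ rk M X) : M.Indep X := by
  rw [indep_iff_eRk_eq_encard]
  refine le_antisymm (M.eRk_le_encard X) ?_
  rw [← rk_eq, ← hX.cast_ncard_eq]
  exact_mod_cast h

theorem rk_of_indep (M : Matroid α) [M.Finite] {X : Set α} (h : M.Indep X) :
    rk M X = X.ncard := by
  have h1 := rk_eq M X
  have hX : X.Finite := M.ground_finite.subset h.subset_ground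
  rw [h.eRk_eq_encard, ← hX.cast_ncard_eq] at h1
  exact_mod_cast h1

theorem ndpRank (M : Matroid α) [M.Finite] (hM : ThreeConnected M) : NDPRank (rk M) M.E where
  mono X Y h := by
    have := M.eRk_mono h
    rw [← rk_eq, ← rk_eq] at this
    exact_mod_cast this
  sub X Y := by
    have := M.eRk_inter_add_eRk_union_le X Y
    simp only [← rk_eq] at this
    rw [add_comm (rk M (X ∪ Y))]
    exact_mod_cast this
  small X h := by
    have h1 := M.eRk_le_encard X
    rw [Set.not_nontrivial_iff] at h
    have h2 := h1.trans (Set.encard_le_one_iff_subsingleton.2 h)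
    rw [← rk_eq] at h2
    exact_mod_cast h2
  sep X Y hun hdj hX hY := by
    by_contra hc
    have hYe : M.E \ X = Y := by
      rw [← hun, Set.union_sdiff_left, hdj.symm.sdiff_eq_left]
    have hXE : X ⊆ M.E := by rw [← hun]; exact Set.subset_union_left
    have hYE : Y ⊆ M.E := by rw [← hun]; exact Set.subset_union_right
    refine hM 2 (by norm_num) X ⟨⟨hXE, ?_⟩, ?_, ?_⟩
    · rw [lam, hYe]; push_cast; omega
    · exact (Set.one_lt_ncard_iff_nontrivial_and_finite.2 ⟨hX, M.ground_finite.subset hXE⟩)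
    · rw [hYe]
      exact (Set.one_lt_ncard_iff_nontrivial_and_finite.2 ⟨hY, M.ground_finite.subset hYE⟩)

theorem triangle_of_rk (M : Matroid α) [M.Finite] {c e f : α} (hc : c ∈ M.E) (he : e ∈ M.E)
    (hf : f ∈ M.E) (hce : c ≠ e) (hcf : c ≠ f) (hef : e ≠ f) (h : rk M {c, e, f} = 2)
    (h1 : rk M {e, f} = 2) (h2 : rk M {c, e} = 2) (h3 : rk M {c, f} = 2) :
    Triangle M {c, e, f} := by
  have hcard : ({c, e, f} : Set α).ncard = 3 := by
    rw [Set.ncard_eq_three]; exact ⟨c, e, f, hce, hcf, hef, rfl⟩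
  refine ⟨⟨?_, ?_, ?_⟩, hcard⟩
  · intro x; simp only [Set.mem_insert_iff, Set.mem_singleton_iff]; grind
  · intro hi
    have := rk_of_indep M hi
    omega
  · intro D hD
    have i1 : M.Indep {e, f} :=
      indep_of_rk M (Set.toFinite _) (by rw [Set.ncard_pair hef]; omega)
    have i2 : M.Indep {c, e} :=
      indep_of_rk M (Set.toFinite _) (by rw [Set.ncard_pair hce]; omega)
    have i3 : M.Indep {c, f} :=
      indep_of_rk M (Set.toFinite _) (by rw [Set.ncard_pair hcf]; omega)
    obtain ⟨hsub, x, hx, hxD⟩ := (Set.ssubset_iff_exists).1 hD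
    have hsub' : ∀ y ∈ D, y = c ∨ y = e ∨ y = f := fun y hy => by simpa using hsub hy
    simp only [Set.mem_insert_iff, Set.mem_singleton_iff] at hx
    rcases hx with rfl | rfl | rfl
    · refine i1.subset fun y hy => ?_
      simp only [Set.mem_insert_iff, Set.mem_singleton_iff]; grind
    · refine i3.subset fun y hy => ?_
      simp only [Set.mem_insert_iff, Set.mem_singleton_iff]; grind
    · refine i2.subset fun y hy => ?_
      simp only [Set.mem_insert_iff, Set.mem_singleton_iff]; grind

theorem cocircuit_rk (M : Matroid α) [M.Finite] {C : Set α} (hC : Cocircuit M C) {x : α}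
    (hx : x ∈ C) : rk M (M.E \ C) + 1 ≤ rk M (insert x (M.E \ C)) := by
  obtain ⟨hCE, hni, hmin⟩ := hC
  have hCE' : C ⊆ M.E := hCE
  have h1 : ¬ M.Spanning (M.E \ C) := fun h => hni ((M.coindep_iff_compl_spanning hCE').2 h)
  have h2 : M.Spanning (M.E \ (C \ {x})) :=
    (M.coindep_iff_compl_spanning (Set.sdiff_subset.trans hCE')).1
      (hmin _ (Set.sdiff_singleton_ssubset.2 hx))
  have h3 : M.E \ (C \ {x}) = insert x (M.E \ C) := by
    ext y
    have := hCE' hx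
    simp only [Set.mem_sdiff, Set.mem_singleton_iff, Set.mem_insert_iff]
    grind
  rw [h3] at h2
  rw [spanning_iff_eRk_le Set.sdiff_subset, ← h2.eRk_eq, ← rk_eq, ← rk_eq] at h1
  have h4 : ¬ (rk M (insert x (M.E \ C)) ≤ rk M (M.E \ C)) := fun h => h1 (by exact_mod_cast h)
  omega

theorem exists_sep (M : Matroid α) [M.Finite] (hM : ThreeConnected M) (h4 : 4 ≤ M.E.ncard)
    {c : α} (hc : c ∈ M.E) (h : ¬ ThreeConnected (contract M {c})) :
    ∃ X Y, NDPSep (rk M) M.E c X Y := by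
  have hr := ndpRank M hM
  have hfin := M.ground_finite
  obtain ⟨f, hf, hfc⟩ : ∃ f ∈ M.E, f ≠ c := Set.exists_ne_of_one_lt_ncard (by omega) c
  have hr1 : 1 ≤ rk M {c} := by
    have h1 := hr.pair_rk hfin h4 hf hc hfc
    have h2 := hr.insert_le f {c}
    omega
  have hi : M.Indep {c} := indep_of_rk M (Set.toFinite _) (by rw [Set.ncard_singleton]; omega)
  unfold ThreeConnected at h
  push Not at h
  obtain ⟨k, hk, X, ⟨hXE, hlam⟩, hkX, hkY⟩ := h
  have hE : (contract M {c}).E = M.E \ {c} := rfl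
  rw [hE] at hXE hkY
  rw [lam, hE] at hlam
  have e1 := rk_contract M hi hXE
  have e2 := rk_contract M hi (Set.sdiff_subset : (M.E \ {c}) \ X ⊆ _)
  have e3 := rk_contract M hi (le_refl (M.E \ {c}))
  rw [Set.insert_sdiff_singleton, Set.insert_eq_of_mem hc] at e3
  refine ⟨X, (M.E \ {c}) \ X, hr.mkSep hfin h4 hr1 ?_ Set.disjoint_sdiff_right
    (fun h => (hXE h).2 rfl) (fun h => h.1.2 rfl) k hk hkX hkY ?_⟩
  · rw [Set.union_sdiff_cancel hXE, Set.insert_sdiff_singleton, Set.insert_eq_of_mem hc]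
  · omega

end NDP



/-- If `C*` is a 4-element cocircuit of a 3-connected matroid
containing two distinct elements neither of which lies in a triangle, then `M/c`
is 3-connected for some `c ∈ C*`. -/
theorem stmt17 (M : Matroid α) [M.Finite] (hM : NDP.ThreeConnected M)
    (C : Set α) (hC : NDP.Cocircuit M C) (hcard : C.ncard = 4)
    (c' c'' : α) (hc' : c' ∈ C) (hc'' : c'' ∈ C) (hne : c' ≠ c'')
    (ht' : ∀ T, NDP.Triangle M T → c' ∉ T)
    (ht'' : ∀ T, NDP.Triangle M T → c'' ∉ T) :
    ∃ c ∈ C, NDP.ThreeConnected (NDP.contract M {c}) := by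
  by_contra hcon
  push Not at hcon
  have hCE : C ⊆ M.E := hC.1
  have hfin := M.ground_finite
  have hCf := hfin.subset hCE
  have h4 : 4 ≤ M.E.ncard := by rw [← hcard]; exact Set.ncard_le_ncard hCE hfin
  have hr := NDP.ndpRank M hM
  -- name the remaining two elements
  have hsub : ({c', c''} : Set α) ⊆ C := by
    intro x; simp only [Set.mem_insert_iff, Set.mem_singleton_iff]; grind
  have hcd := Set.ncard_sdiff_add_ncard_of_subset hsub hCf
  rw [Set.ncard_pair hne] at hcd
  obtain ⟨c, d, hcd', hCeq⟩ := Set.ncard_eq_two.1 (by omega : (C \ {c', c''}).ncard = 2)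
  have hc : c ∈ C \ {c', c''} := by rw [hCeq]; simp
  have hd : d ∈ C \ {c', c''} := by rw [hCeq]; simp
  have hCe : C = {c', c'', c, d} := by
    ext x
    have : x ∈ C \ {c', c''} ↔ x ∈ ({c, d} : Set α) := by rw [hCeq]
    simp only [Set.mem_insert_iff, Set.mem_singleton_iff, Set.mem_sdiff] at *
    grind
  simp only [Set.mem_insert_iff, Set.mem_singleton_iff, Set.mem_sdiff, not_or] at hc hd
  have nt : ∀ x ∈ M.E, (∀ T, NDP.Triangle M T → x ∉ T) → NDPRank.NoTri (NDP.rk M) M.E x := by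
    intro x hx hT
    by_contra hn
    obtain ⟨e, f, he, hf, hce, hcf, hef, t1, t2, t3, t4⟩ := hr.tri hfin h4 hx hn
    exact hT _ (NDP.triangle_of_rk M hx he hf hce hcf hef t1 t2 t3 t4) (by simp)
  refine hr.main hne (Ne.symm hc.2.1) (Ne.symm hd.2.1) (Ne.symm hc.2.2) (Ne.symm hd.2.2) hcd'
    (hCe ▸ hCE) ?_ ?_ (nt c' (hCE hc') ht') (nt c'' (hCE hc'') ht'')
    (fun c hcE hn => hr.tri hfin h4 hcE hn)
  · rw [← hCe]
    intro x hx Z hZ hdj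
    exact hr.ncl_anti (Set.subset_sdiff.2 ⟨hZ, hdj⟩) x (NDP.cocircuit_rk M hC hx)
  · rw [← hCe]
    intro x hx
    exact NDP.exists_sep M hM h4 (hCE hx) (hcon x hx)
end

section
/- Let F be a maximal fan with at least four elements in a 3-connected matroid M that is not a wheel or a whirl, and let f be an end of F. If f is a spoke element then M \ f is 3-connected, and if f is a rim element then M / f is 3-connected. -/
open Set Matroid

variable {α β : Type*}

namespace NDPAux
open NDP

lemma cast_rk (M : Matroid α) [M.Finite] (X : Set α) : ((rk M X : ℕ) : ℕ∞) = M.eRk X := by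
  obtain ⟨I, hI⟩ := M.exists_isBasis' X
  have hfin : I.Finite := hI.indep.finite
  have key : rk M X = I.ncard := by
    unfold rk
    apply le_antisymm
    · apply csSup_le
      · exact ⟨I.ncard, I, hI.indep, hI.subset, rfl⟩
      · rintro n ⟨J, hJ, hJX, rfl⟩
        have h1 := hJ.encard_le_eRk_of_subset hJX
        rw [← hI.encard_eq_eRk, ← hJ.finite.cast_ncard_eq, ← hfin.cast_ncard_eq] at h1
        exact_mod_cast h1
    · apply le_csSup
      · refine ⟨M.E.ncard, ?_⟩
        rintro n ⟨J, hJ, hJX, rfl⟩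
        exact Set.ncard_le_ncard hJ.subset_ground M.ground_finite
      · exact ⟨I, hI.indep, hI.subset, rfl⟩
  rw [key, hfin.cast_ncard_eq, hI.encard_eq_eRk]

lemma rk_mono (M : Matroid α) [M.Finite] {X Y : Set α} (h : X ⊆ Y) : rk M X ≤ rk M Y := by
  have := M.eRk_mono h
  rw [← cast_rk, ← cast_rk] at this
  exact_mod_cast this

lemma rk_submod (M : Matroid α) [M.Finite] (X Y : Set α) :
    rk M (X ∩ Y) + rk M (X ∪ Y) ≤ rk M X + rk M Y := by
  have := M.eRk_inter_add_eRk_union_le X Y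
  simp only [← cast_rk] at this
  exact_mod_cast this

lemma rk_union_le (M : Matroid α) [M.Finite] (X Y : Set α) :
    rk M (X ∪ Y) ≤ rk M X + rk M Y := by
  have := rk_submod M X Y
  omega

lemma rk_insert_le (M : Matroid α) [M.Finite] (e : α) (X : Set α) :
    rk M (insert e X) ≤ rk M X + 1 := by
  have := M.eRk_insert_le_add_one e X
  simp only [← cast_rk] at this
  exact_mod_cast this

lemma rk_le_ncard (M : Matroid α) [M.Finite] {X : Set α} (hX : X.Finite) :
    rk M X ≤ X.ncard := by
  have := M.eRk_le_encard X
  rw [← cast_rk, ← hX.cast_ncard_eq] at this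
  exact_mod_cast this

lemma indep_iff (M : Matroid α) [M.Finite] {X : Set α} (hX : X.Finite) :
    M.Indep X ↔ rk M X = X.ncard := by
  rw [Matroid.indep_iff_eRk_eq_encard_of_finite hX, ← cast_rk, ← hX.cast_ncard_eq]
  norm_cast

lemma rk_dual (M : Matroid α) [M.Finite] {X : Set α} (hX : X ⊆ M.E) :
    rk M✶ X + rk M M.E = rk M (M.E \ X) + X.ncard := by
  have := M.eRk_dual_add_eRank X hX
  rw [Matroid.eRank_def, ← (M.ground_finite.subset hX).cast_ncard_eq] at this
  simp only [← cast_rk] at this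
  exact_mod_cast this

lemma rk_restrict (M : Matroid α) [M.Finite] {X R : Set α} (hR : R ⊆ M.E) (hX : X ⊆ R) :
    rk (M ↾ R) X = rk M X := by
  have : (M ↾ R).Finite := Matroid.restrict_finite (M.ground_finite.subset hR)
  have := M.restrict_eRk_eq hX
  simp only [← cast_rk] at this
  exact_mod_cast this

lemma lam_dual (M : Matroid α) [M.Finite] {X : Set α} (hX : X ⊆ M.E) :
    lam M✶ X = lam M X := by
  have h1 := rk_dual M hX
  have h2 := rk_dual M (X := M.E \ X) sdiff_subset
  have h3 := rk_dual M (X := M.E) subset_rfl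
  have h4 := Set.ncard_sdiff_add_ncard_of_subset hX M.ground_finite
  rw [sdiff_sdiff_cancel_left hX] at h2
  have h0 : rk M (M.E \ M.E) = 0 := by
    have := rk_le_ncard M (X := M.E \ M.E) (by simp)
    simpa using this
  unfold lam
  rw [Matroid.dual_ground]
  omega

lemma lam_eq (M : Matroid α) [M.Finite] {X : Set α} (hX : X ⊆ M.E) :
    lam M X = rk M X + rk M✶ X - X.ncard := by
  have h1 := rk_dual M hX
  unfold lam
  omega

lemma three_dual (M : Matroid α) [M.Finite] (h : ThreeConnected M) : ThreeConnected M✶ := by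
  intro k hk X ⟨⟨hX, hl⟩, h1, h2⟩
  rw [Matroid.dual_ground] at hX h2
  rw [lam_dual M hX] at hl
  exact h k hk X ⟨⟨hX, hl⟩, h1, h2⟩

lemma circuit_iff (M : Matroid α) (C : Set α) : Circuit M C ↔ M.IsCircuit C := by
  rw [Matroid.isCircuit_iff_forall_ssubset, Matroid.Dep, Circuit]
  tauto

lemma triad_dual (M : Matroid α) (T : Set α) : Triad M✶ T ↔ Triangle M T := by
  simp [Triad, Cocircuit, Triangle]

lemma triangle_dual (M : Matroid α) (T : Set α) : Triangle M✶ T ↔ Triad M T := Iff.rfl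

lemma Triangle.rk {M : Matroid α} [M.Finite] {T : Set α} (h : Triangle M T) : rk M T = 2 := by
  have h1 := ((circuit_iff M T).1 h.1).eRk_add_one_eq
  have hf : T.Finite := M.ground_finite.subset h.1.1
  rw [← hf.cast_ncard_eq, h.2, ← cast_rk] at h1
  have : NDP.rk M T + 1 = 3 := by exact_mod_cast h1
  omega

lemma Triad.rk {M : Matroid α} [M.Finite] {T : Set α} (h : Triad M T) : rk M✶ T = 2 :=
  Triangle.rk ((triangle_dual M T).2 h)

lemma orth {M : Matroid α} {C D : Set α} (hC : Triangle M C) (hD : Triad M D) (e : α) :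
    C ∩ D ≠ {e} :=
  ((circuit_iff M C).1 hC.1).inter_isCocircuit_ne_singleton ((circuit_iff M✶ D).1 hD.1)

/-- separation bounds -/
lemma two_le_lam {M : Matroid α} (h : ThreeConnected M) {X : Set α} (hX : X ⊆ M.E)
    (h1 : 2 ≤ X.ncard) (h2 : 2 ≤ (M.E \ X).ncard) : 2 ≤ lam M X := by
  by_contra hc
  exact h 2 (by norm_num) X ⟨⟨hX, by push_cast; omega⟩, h1, h2⟩

lemma one_le_lam {M : Matroid α} (h : ThreeConnected M) {X : Set α} (hX : X ⊆ M.E)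
    (h1 : 1 ≤ X.ncard) (h2 : 1 ≤ (M.E \ X).ncard) : 1 ≤ lam M X := by
  by_contra hc
  exact h 1 (by norm_num) X ⟨⟨hX, by push_cast; omega⟩, h1, h2⟩

lemma rk_pair {M : Matroid α} [M.Finite] (h : ThreeConnected M) (h4 : 4 ≤ M.E.ncard) {x y : α}
    (hx : x ∈ M.E) (hy : y ∈ M.E) (hxy : x ≠ y) : rk M {x, y} = 2 := by
  have hs : ({x, y} : Set α) ⊆ M.E := by rintro z (rfl | rfl) <;> assumption
  have h2 : ({x, y} : Set α).ncard = 2 := Set.ncard_pair hxy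
  have h5 := Set.ncard_sdiff_add_ncard_of_subset hs M.ground_finite
  have := two_le_lam h hs (by omega) (by omega)
  have h6 := rk_mono M (X := M.E \ {x, y}) (Y := M.E) sdiff_subset
  have h7 := rk_le_ncard M (X := {x, y}) (by simp)
  unfold lam at this
  omega

lemma rk_single {M : Matroid α} [M.Finite] (h : ThreeConnected M) (h4 : 4 ≤ M.E.ncard) {x : α}
    (hx : x ∈ M.E) : rk M {x} = 1 := by
  have hs : ({x} : Set α) ⊆ M.E := by simpa using hx
  have h5 := Set.ncard_sdiff_add_ncard_of_subset hs M.ground_finite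
  have h1 : ({x} : Set α).ncard = 1 := by simp
  have := one_le_lam h hs (by omega) (by omega)
  have h6 := rk_mono M (X := M.E \ {x}) (Y := M.E) sdiff_subset
  have h7 := rk_le_ncard M (X := {x}) (by simp)
  unfold lam at this
  omega

lemma mk_triangle {M : Matroid α} [M.Finite] (h : ThreeConnected M) (h4 : 4 ≤ M.E.ncard)
    {x y z : α} (hx : x ∈ M.E) (hy : y ∈ M.E) (hz : z ∈ M.E) (hxy : x ≠ y) (hxz : x ≠ z)
    (hyz : y ≠ z) (hr : rk M {x, y, z} ≤ 2) : Triangle M {x, y, z} := by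
  have hc : ({x, y, z} : Set α).ncard = 3 := by
    rw [Set.ncard_eq_three]; exact ⟨x, y, z, hxy, hxz, hyz, rfl⟩
  have ip : ∀ u v, u ∈ M.E → v ∈ M.E → u ≠ v → M.Indep {u, v} := by
    intro u v hu hv huv
    rw [indep_iff M (by simp), rk_pair h h4 hu hv huv, Set.ncard_pair huv]
  refine ⟨⟨?_, ?_, ?_⟩, hc⟩
  · rintro w (rfl | rfl | rfl) <;> assumption
  · rw [indep_iff M (by simp)]; omega
  · intro D hD
    obtain ⟨hsub, w, hw, hwD⟩ := Set.ssubset_iff_exists.1 hD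
    have hsub' : ∀ v ∈ D, v = x ∨ v = y ∨ v = z := fun v hv => by simpa using hsub hv
    rcases hw with rfl | rfl | rfl
    · refine (ip y z hy hz hyz).subset fun v hv => ?_
      rcases hsub' v hv with rfl | rfl | rfl <;> simp_all
    · refine (ip x z hx hz hxz).subset fun v hv => ?_
      rcases hsub' v hv with rfl | rfl | rfl <;> simp_all
    · refine (ip x y hx hy hxy).subset fun v hv => ?_
      rcases hsub' v hv with rfl | rfl | rfl <;> simp_all

lemma mk_triad {M : Matroid α} [M.Finite] (h : ThreeConnected M) (h4 : 4 ≤ M.E.ncard)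
    {x y z : α} (hx : x ∈ M.E) (hy : y ∈ M.E) (hz : z ∈ M.E) (hxy : x ≠ y) (hxz : x ≠ z)
    (hyz : y ≠ z) (hr : rk M✶ {x, y, z} ≤ 2) : Triad M {x, y, z} :=
  mk_triangle (M := M✶) (three_dual M h) h4 hx hy hz hxy hxz hyz hr

lemma not_both {M : Matroid α} [M.Finite] (h : ThreeConnected M) (h5 : 5 ≤ M.E.ncard)
    {T : Set α} (h1 : Triangle M T) (h2 : Triad M T) : False := by
  have hs := h1.1.1
  have h4 := Set.ncard_sdiff_add_ncard_of_subset hs M.ground_finite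
  have h3 := h1.2
  have := two_le_lam h hs (by omega) (by omega)
  rw [lam_eq M hs, Triangle.rk h1, Triad.rk h2, h3] at this
  norm_num at this

/-- The rank of a fan segment. -/
lemma rk_fan (M : Matroid α) [M.Finite] (g : ℕ → α) (m : ℕ)
    (h1 : ∀ i < m, 1 ≤ rk M {g (2 * i)})
    (h2 : ∀ i < m, rk M {g (2 * i), g (2 * i + 1), g (2 * i + 2)} ≤ 2) :
    rk M (g '' Set.Iio (2 * m + 1)) ≤ m + 1 := by
  induction m with
  | zero =>
    have : g '' Set.Iio (2 * 0 + 1) = {g 0} := by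
      have : Set.Iio (2 * 0 + 1) = ({0} : Set ℕ) := by ext; simp
      rw [this, Set.image_singleton]
    rw [this]
    have := rk_le_ncard M (X := {g 0}) (by simp)
    simpa using this
  | succ m ih =>
    have ih' := ih (fun i hi => h1 i (by omega)) (fun i hi => h2 i (by omega))
    have a1 := h1 m (by omega)
    have a2 := h2 m (by omega)
    have a3 := rk_submod M (g '' Set.Iio (2 * m + 1)) {g (2 * m), g (2 * m + 1), g (2 * m + 2)}
    have a4 : rk M {g (2 * m)} ≤
        rk M ((g '' Set.Iio (2 * m + 1)) ∩ {g (2 * m), g (2 * m + 1), g (2 * m + 2)}) := by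
      apply rk_mono
      rintro _ rfl
      exact ⟨⟨2 * m, by simp, rfl⟩, by simp⟩
    have a5 : rk M (g '' Set.Iio (2 * (m + 1) + 1)) ≤
        rk M ((g '' Set.Iio (2 * m + 1)) ∪ {g (2 * m), g (2 * m + 1), g (2 * m + 2)}) := by
      apply rk_mono
      rintro _ ⟨j, hj, rfl⟩
      simp only [Set.mem_Iio] at hj
      by_cases hj' : j < 2 * m + 1
      · exact Or.inl ⟨j, hj', rfl⟩
      · right
        have : j = 2 * m + 1 ∨ j = 2 * m + 2 := by omega
        rcases this with rfl | rfl <;> simp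
    omega

/-- Adding the third element of a triangle does not change the rank. -/
lemma rk_insert_triangle {M : Matroid α} [M.Finite] {a b c : α} {X : Set α}
    (hb : b ∈ X) (hc : c ∈ X) (hp : rk M {b, c} = 2) (ht : rk M {a, b, c} ≤ 2) :
    rk M (insert a X) ≤ rk M X := by
  have a3 := rk_submod M X {a, b, c}
  have a4 : rk M {b, c} ≤ rk M (X ∩ {a, b, c}) := by
    apply rk_mono
    rintro v (rfl | rfl) <;> simp_all
  have a5 : rk M (insert a X) ≤ rk M (X ∪ {a, b, c}) := by
    apply rk_mono
    rintro v (rfl | hv)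
    · simp
    · exact Or.inl hv
  omega

lemma sep_triad {M : Matroid α} [M.Finite] (h : ThreeConnected M) (h4 : 4 ≤ M.E.ncard)
    {a b c d : α} {X Y : Set α} (hT : Triangle M {a, b, c}) (hD : Triad M {b, c, d})
    (hbc : b ≠ c) (hX : X ⊆ M.E) (hY : Y ⊆ M.E) (haX : a ∉ X) (haY : a ∉ Y)
    (hdisj : ∀ v ∈ X, v ∉ Y) (hun : ∀ v ∈ M.E, v = a ∨ v ∈ X ∨ v ∈ Y)
    (hb : b ∈ X) (hd : d ∈ X) (hc : c ∈ Y) (hY2 : 2 ≤ Y.ncard)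
    (hr : rk M X + rk M Y ≤ rk M M.E + 1) :
    ∃ g ∈ M.E, g ≠ a ∧ g ≠ b ∧ g ≠ c ∧ g ≠ d ∧ Triad M {a, c, g} := by
  have haE : a ∈ M.E := hT.1.1 (by simp)
  have hbE := hX hb
  have hcE := hY hc
  have hfY := M.ground_finite.subset hY
  -- the complement of the triad
  have hDE := hD.1.1
  rw [Matroid.dual_ground] at hDE
  have r1 := rk_dual M hDE
  rw [Triad.rk hD, hD.2] at r1
  have r2 := rk_submod M Y (M.E \ {b, c, d})
  have hbd : rk M✶ {b, d} = 2 := by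
    refine rk_pair (M := M✶) (three_dual M h) h4 hbE (hX hd) ?_
    rintro rfl
    have := hD.2
    have h3 : ({b, c, b} : Set α) = {b, c} := by ext; simp; tauto
    rw [h3, Set.ncard_pair hbc] at this
    omega
  have hbdn : ({b, d} : Set α).ncard ≤ 2 := Set.ncard_insert_le b {d} |>.trans (by simp)
  have r3 := rk_dual M (X := {b, d}) (by rintro v (rfl | rfl); exacts [hbE, hX hd])
  have r4 : rk M (M.E \ {b, d}) ≤ rk M (Y ∪ (M.E \ {b, c, d})) := by
    apply rk_mono
    rintro v ⟨hv, hv'⟩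
    by_cases hvc : v = c
    · subst hvc; exact Or.inl hc
    · right; refine ⟨hv, ?_⟩; simp at hv' ⊢; tauto
  have r5 : rk M (Y \ {c}) ≤ rk M (Y ∩ (M.E \ {b, c, d})) := by
    apply rk_mono
    rintro v ⟨hv, hv'⟩
    refine ⟨hv, hY hv, ?_⟩
    rintro (rfl | rfl | rfl)
    · exact hdisj _ hb hv
    · exact hv' rfl
    · exact hdisj _ hd hv
  have hY' : Y \ {c} = M.E \ insert a (insert c X) := by
    ext v
    constructor
    · rintro ⟨hv, hv'⟩
      refine ⟨hY hv, ?_⟩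
      rintro (rfl | rfl | hx)
      · exact haY hv
      · exact hv' rfl
      · exact hdisj _ hx hv
    · rintro ⟨hv, hv'⟩
      simp only [Set.mem_insert_iff, not_or] at hv'
      rcases hun v hv with h1 | h1 | h1
      · exact absurd h1 hv'.1
      · exact absurd h1 hv'.2.2
      · exact ⟨h1, hv'.2.1⟩
  have hac : a ≠ c := by rintro rfl; exact haY hc
  have r6 : rk M (insert a (insert c X)) ≤ rk M (insert c X) :=
    rk_insert_triangle (b := b) (c := c) (by simp [hb]) (by simp)
      (rk_pair h h4 hbE hcE hbc) (Triangle.rk hT).le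
  have r7 := rk_insert_le M c X
  have hsub : insert a (insert c X) ⊆ M.E := by
    rintro v (rfl | rfl | hv)
    exacts [haE, hcE, hX hv]
  have hn2 : 2 ≤ (insert a (insert c X)).ncard := by
    have : ({a, c} : Set α) ⊆ insert a (insert c X) := by
      rintro v (rfl | rfl) <;> simp
    have := Set.ncard_le_ncard this (M.ground_finite.subset hsub)
    rwa [Set.ncard_pair hac] at this
  have hYc := Set.ncard_sdiff_singleton_add_one hc hfY
  have hle : (Y \ {c}).ncard ≤ 1 := by
    by_contra hcon
    have := two_le_lam h hsub hn2 (by rw [← hY']; omega)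
    unfold lam at this
    rw [← hY'] at this
    omega
  have h1 : (Y \ {c}).ncard = 1 := by omega
  obtain ⟨g, hg⟩ := Set.ncard_eq_one.1 h1
  have hgY : g ∈ Y \ {c} := by rw [hg]; rfl
  have hgc : g ≠ c := hgY.2
  have hga : g ≠ a := by rintro rfl; exact haY hgY.1
  have hgE := hY hgY.1
  have hYeq : Y = {c, g} := by
    ext v
    constructor
    · intro hv
      by_cases hvc : v = c
      · simp [hvc]
      · have : v ∈ Y \ {c} := ⟨hv, hvc⟩
        rw [hg] at this
        right; exact this
    · rintro (rfl | rfl)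
      exacts [hc, hgY.1]
  refine ⟨g, hgE, hga, ?_, hgc, ?_, ?_⟩
  · rintro rfl; exact hdisj _ hb hgY.1
  · rintro rfl; exact hdisj _ hd hgY.1
  · apply mk_triad h h4 haE hcE hgE hac (Ne.symm hga) (Ne.symm hgc)
    have s1 := rk_pair h h4 hcE hgE (Ne.symm hgc)
    have hs : ({a, c, g} : Set α) ⊆ M.E := by rintro v (rfl | rfl | rfl) <;> assumption
    have s2 := rk_dual M hs
    have s3 : M.E \ {a, c, g} = X := by
      ext v
      constructor
      · rintro ⟨hv, hv'⟩
        rcases hun v hv with h1 | h1 | h1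
        · exact absurd (by simp [h1]) hv'
        · exact h1
        · rw [hYeq] at h1
          exact absurd (Or.inr h1) hv'
      · intro hv
        refine ⟨hX hv, ?_⟩
        rintro (rfl | hv')
        · exact haX hv
        · rw [← hYeq] at hv'
          exact hdisj _ hv hv'
    have s4 : ({a, c, g} : Set α).ncard = 3 := by
      rw [Set.ncard_eq_three]; exact ⟨a, c, g, hac, Ne.symm hga, Ne.symm hgc, rfl⟩
    rw [← hYeq] at s1
    rw [s3, s4] at s2
    omega

/-- If deleting the end of a triangle-triad 4-fan destroys 3-connectedness, then there is a triad
through that end. -/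
lemma triad_of_not_three {M : Matroid α} [M.Finite] (h : ThreeConnected M) (h4 : 4 ≤ M.E.ncard)
    {a b c d : α} (hT : Triangle M {a, b, c}) (hD : Triad M {b, c, d})
    (hbc : b ≠ c) (hab : a ≠ b) (hac : a ≠ c) (had : a ≠ d)
    (hn : ¬ ThreeConnected (NDP.delete M {a})) :
    ∃ g ∈ M.E, g ≠ a ∧ g ≠ b ∧ g ≠ c ∧ g ≠ d ∧ (Triad M {a, b, g} ∨ Triad M {a, c, g}) := by
  have haE : a ∈ M.E := hT.1.1 (by simp)
  have hbE : b ∈ M.E := hT.1.1 (by simp)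
  have hcE : c ∈ M.E := hT.1.1 (by simp)
  have hdE : d ∈ M.E := hD.1.1 (by simp)
  unfold ThreeConnected at hn
  push Not at hn
  obtain ⟨k, hk, X, ⟨hXs, hlam⟩, hkX, hkY⟩ := hn
  have hE : (NDP.delete M {a}).E = M.E \ {a} := rfl
  rw [hE] at hXs hkY
  set Y := (M.E \ {a}) \ X with hYdef
  have hX : X ⊆ M.E := hXs.trans sdiff_subset
  have hY : Y ⊆ M.E := sdiff_subset.trans sdiff_subset
  have haX : a ∉ X := fun hh => (hXs hh).2 rfl
  have haY : a ∉ Y := fun hh => hh.1.2 rfl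
  have hdisj : ∀ v ∈ X, v ∉ Y := fun v hv hv' => hv'.2 hv
  have hun : ∀ v ∈ M.E, v = a ∨ v ∈ X ∨ v ∈ Y := by
    intro v hv
    by_cases h1 : v = a
    · exact Or.inl h1
    · by_cases h2 : v ∈ X
      · exact Or.inr (Or.inl h2)
      · exact Or.inr (Or.inr ⟨⟨hv, h1⟩, h2⟩)
  have hr : (rk M X : ℤ) + rk M Y ≤ rk M (M.E \ {a}) + k - 1 := by
    unfold lam at hlam
    rw [hE, ← hYdef] at hlam
    unfold NDP.delete at hlam
    rw [rk_restrict M sdiff_subset hXs, rk_restrict M sdiff_subset (sdiff_subset),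
      rk_restrict M sdiff_subset subset_rfl, ← hYdef] at hlam
    omega
  have hmono := rk_mono M (X := M.E \ {a}) (Y := M.E) sdiff_subset
  have hunion : rk M (M.E \ {a}) ≤ rk M X + rk M Y := by
    refine (rk_mono M ?_).trans (rk_union_le M X Y)
    intro v hv
    rcases hun v hv.1 with h1 | h1 | h1
    · exact absurd h1 hv.2
    · exact Or.inl h1
    · exact Or.inr h1
  have hk1 : 1 ≤ k := by
    by_contra hcon
    omega
  have fX := M.ground_finite.subset hX
  have fY := M.ground_finite.subset hY
  have cY : M.E \ insert a X = Y := by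
    ext v; simp [hYdef]; tauto
  have cX : M.E \ insert a Y = X := by
    ext v
    constructor
    · rintro ⟨hv, hv'⟩
      simp only [Set.mem_insert_iff, not_or] at hv'
      rcases hun v hv with h1 | h1 | h1 <;> tauto
    · intro hv
      refine ⟨hX hv, ?_⟩
      rintro (rfl | hv')
      · exact haX hv
      · exact hdisj _ hv hv'
  have iX := Set.ncard_insert_of_notMem haX fX
  have iY := Set.ncard_insert_of_notMem haY fY
  have sX : insert a X ⊆ M.E := by rintro v (rfl | hv); exacts [haE, hX hv]
  have sY : insert a Y ⊆ M.E := by rintro v (rfl | hv); exacts [haE, hY hv]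
  have tX := rk_insert_le M a X
  have tY := rk_insert_le M a Y
  have tot := Set.ncard_sdiff_add_ncard_of_subset sX M.ground_finite
  rw [cY] at tot
  have hk2 : k = 2 := by
    by_contra hcon
    have hk' : k = 1 := by omega
    subst hk'
    have lX : Y.ncard ≤ 1 := by
      by_contra hc'
      have := two_le_lam h sX (by omega) (by rw [cY]; omega)
      unfold lam at this
      rw [cY] at this
      omega
    have lY : X.ncard ≤ 1 := by
      by_contra hc'
      have := two_le_lam h sY (by omega) (by rw [cX]; omega)
      unfold lam at this
      rw [cX] at this
      omega
    omega
  subst hk2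
  have hr' : rk M X + rk M Y ≤ rk M M.E + 1 := by omega
  have pbc := rk_pair h h4 hbE hcE hbc
  have tr := (Triangle.rk hT).le
  have nX : ¬ (b ∈ X ∧ c ∈ X) := by
    rintro ⟨h1, h2⟩
    have q := rk_insert_triangle h1 h2 pbc tr
    have := two_le_lam h sX (by omega) (by rw [cY]; omega)
    unfold lam at this
    rw [cY] at this
    omega
  have nY : ¬ (b ∈ Y ∧ c ∈ Y) := by
    rintro ⟨h1, h2⟩
    have q := rk_insert_triangle h1 h2 pbc tr
    have := two_le_lam h sY (by omega) (by rw [cX]; omega)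
    unfold lam at this
    rw [cX] at this
    omega
  have hdisj' : ∀ v ∈ Y, v ∉ X := fun v hv hv' => hv.2 hv'
  have hun' : ∀ v ∈ M.E, v = a ∨ v ∈ Y ∨ v ∈ X := fun v hv => by
    rcases hun v hv with h1 | h1 | h1 <;> tauto
  have hT' : Triangle M {a, c, b} := by rwa [Set.pair_comm c b]
  have hD' : Triad M {c, b, d} := by rwa [Set.insert_comm c b]
  have hr'' : rk M Y + rk M X ≤ rk M M.E + 1 := by omega
  rcases (hun b hbE).resolve_left (Ne.symm hab) with hb | hb <;>
  rcases (hun c hcE).resolve_left (Ne.symm hac) with hc | hc <;>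
  rcases (hun d hdE).resolve_left (Ne.symm had) with hd | hd
  · exact absurd ⟨hb, hc⟩ nX
  · exact absurd ⟨hb, hc⟩ nX
  · obtain ⟨g, g1, g2, g3, g4, g5, g6⟩ := sep_triad h h4 hT hD hbc hX hY haX haY hdisj hun hb hd hc
      hkY hr'
    exact ⟨g, g1, g2, g3, g4, g5, Or.inr g6⟩
  · obtain ⟨g, g1, g2, g3, g4, g5, g6⟩ := sep_triad h h4 hT' hD' (Ne.symm hbc) hY hX haY haX
      hdisj' hun' hc hd hb hkX hr''
    exact ⟨g, g1, g2, g4, g3, g5, Or.inl g6⟩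
  · obtain ⟨g, g1, g2, g3, g4, g5, g6⟩ := sep_triad h h4 hT' hD' (Ne.symm hbc) hX hY haX haY
      hdisj hun hc hd hb hkY hr'
    exact ⟨g, g1, g2, g4, g3, g5, Or.inl g6⟩
  · obtain ⟨g, g1, g2, g3, g4, g5, g6⟩ := sep_triad h h4 hT hD hbc hY hX haY haX hdisj' hun' hb hd
      hc hkX hr''
    exact ⟨g, g1, g2, g3, g4, g5, Or.inr g6⟩
  · exact absurd ⟨hb, hc⟩ nY
  · exact absurd ⟨hb, hc⟩ nY

lemma fan_parity {M : Matroid α} {k : ℕ} {f : ℕ → α} (ho : IsFanOrd M k f)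
    (hT : Triangle M {f 0, f 1, f 2}) (i : ℕ) :
    (2 * i + 2 < k → Triangle M {f (2 * i), f (2 * i + 1), f (2 * i + 2)}) ∧
    (2 * i + 3 < k → Triad M {f (2 * i + 1), f (2 * i + 2), f (2 * i + 3)}) := by
  obtain ⟨-, -, -, -, hs⟩ := ho
  induction i with
  | zero => exact ⟨fun _ => hT, fun hk => (hs 0 (by omega)).1 hT⟩
  | succ i ih =>
    have h1 : 2 * (i + 1) + 2 < k →
        Triangle M {f (2 * (i + 1)), f (2 * (i + 1) + 1), f (2 * (i + 1) + 2)} := by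
      intro hk
      exact (hs (2 * i + 1) (by omega)).2 (ih.2 (by omega))
    refine ⟨h1, fun hk => ?_⟩
    exact (hs (2 * (i + 1)) (by omega)).1 (h1 (by omega))

lemma fan_wheel {M : Matroid α} {n : ℕ} {f : ℕ → α} (hn : 2 ≤ n)
    (hinj : Set.InjOn f (Set.Iio (2 * n))) (hE : f '' Set.Iio (2 * n) = M.E)
    (h1 : ∀ i, i + 1 < n → Triangle M {f (2 * i), f (2 * i + 1), f (2 * i + 2)})
    (h2 : ∀ i, i + 1 < n → Triad M {f (2 * i + 1), f (2 * i + 2), f (2 * i + 3)})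
    (h3 : Triangle M {f (2 * n - 2), f (2 * n - 1), f 0})
    (h4 : Triad M {f (2 * n - 1), f 0, f 1}) : IsWheelOrWhirl M := by
  have : NeZero n := ⟨by omega⟩
  have : Fact (1 < n) := ⟨by omega⟩
  refine ⟨n, fun i => f (2 * i.val), fun i => f (2 * i.val + 1), hn, ?_, ?_, ?_⟩
  · rintro ⟨i, b⟩ ⟨j, c⟩ hij
    have hi := ZMod.val_lt i
    have hj := ZMod.val_lt j
    have key : (if b then 2 * i.val else 2 * i.val + 1) = (if c then 2 * j.val else 2 * j.val + 1) := by
      apply hinj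
      · simp only [Set.mem_Iio]; split <;> omega
      · simp only [Set.mem_Iio]; split <;> omega
      · simp only at hij
        cases b <;> cases c <;> simpa using hij
    have hb : b = c ∧ i.val = j.val := by
      cases b <;> cases c <;> simp at key ⊢ <;> omega
    rw [Prod.mk.injEq]
    exact ⟨ZMod.val_injective n hb.2, hb.1⟩
  · rw [← hE]
    ext v
    constructor
    · rintro (⟨i, rfl⟩ | ⟨i, rfl⟩)
      · have hi := ZMod.val_lt i
        exact ⟨2 * i.val, by simp only [Set.mem_Iio]; omega, rfl⟩
      · have hi := ZMod.val_lt i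
        exact ⟨2 * i.val + 1, by simp only [Set.mem_Iio]; omega, rfl⟩
    · rintro ⟨j, hj, rfl⟩
      simp only [Set.mem_Iio] at hj
      have hv : ((j / 2 : ℕ) : ZMod n).val = j / 2 := ZMod.val_cast_of_lt (by omega)
      rcases Nat.even_or_odd' j with ⟨m, hm | hm⟩
      · left
        refine ⟨((j / 2 : ℕ) : ZMod n), ?_⟩
        simp only [hv]
        congr 1; omega
      · right
        refine ⟨((j / 2 : ℕ) : ZMod n), ?_⟩
        simp only [hv]
        congr 1; omega
  · intro i
    have hi := ZMod.val_lt i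
    have hv : (i + 1).val = (i.val + 1) % n := by rw [ZMod.val_add, ZMod.val_one]
    by_cases hc : i.val + 1 < n
    · rw [Nat.mod_eq_of_lt hc] at hv
      simp only [hv]
      exact ⟨h1 _ hc, h2 _ hc⟩
    · have he : i.val + 1 = n := by omega
      rw [he, Nat.mod_self] at hv
      simp only [hv]
      have e1 : 2 * i.val = 2 * n - 2 := by omega
      have e2 : 2 * n - 2 + 1 = 2 * n - 1 := by omega
      rw [e1, e2]
      exact ⟨h3, h4⟩

lemma five_le {M : Matroid α} [M.Finite] {k : ℕ} {f : ℕ → α} (ho : IsFanOrd M k f) (hk : 4 ≤ k)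
    {g : α} (hg : g ∈ M.E) (g0 : g ≠ f 0) (g1 : g ≠ f 1) (g2 : g ≠ f 2) (g3 : g ≠ f 3) :
    5 ≤ M.E.ncard := by
  obtain ⟨-, hinj, hE, -, -⟩ := ho
  have h4 : (f '' Set.Iio 4).ncard = 4 := by
    rw [Set.InjOn.ncard_image (hinj.mono (Set.Iio_subset_Iio hk))]
    simp
  have hn : g ∉ f '' Set.Iio 4 := by
    rintro ⟨j, hj, rfl⟩
    simp only [Set.mem_Iio] at hj
    interval_cases j <;> simp_all
  have hf : (f '' Set.Iio 4).Finite := (Set.finite_Iio 4).image f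
  have h5 := Set.ncard_insert_of_notMem hn hf
  have : insert g (f '' Set.Iio 4) ⊆ M.E := by
    rintro v (rfl | ⟨j, hj, rfl⟩)
    · exact hg
    · exact hE j (lt_of_lt_of_le hj hk)
  have := Set.ncard_le_ncard this M.ground_finite
  omega

lemma no_triad01 {M : Matroid α} [M.Finite] (hM : ThreeConnected M)
    (hW : ¬ IsWheelOrWhirl M) {F : Set α} (hmax : IsMaximalFan M F)
    {k : ℕ} {f : ℕ → α} (ho : IsFanOrd M k f) (hF : F = f '' Set.Iio k)
    (hk : 4 ≤ k) (hT : Triangle M {f 0, f 1, f 2}) {g : α} (hg : g ∈ M.E)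
    (g0 : g ≠ f 0) (g1 : g ≠ f 1) (g2 : g ≠ f 2) (g3 : g ≠ f 3)
    (hD : Triad M {f 0, f 1, g}) : False := by
  have h5 := five_le ho hk hg g0 g1 g2 g3
  have hpar := fan_parity ho hT
  obtain ⟨-, hinj, hE, -, hs⟩ := id ho
  have hne : ∀ i j, i < k → j < k → i ≠ j → f i ≠ f j := fun i j hi hj hij he =>
    hij (hinj hi hj he)
  have hDg : Triad M {g, f 0, f 1} := by
    have : ({g, f 0, f 1} : Set α) = {f 0, f 1, g} := by ext; simp; tauto
    rwa [this]
  by_cases hgF : g ∈ F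
  · rw [hF] at hgF
    obtain ⟨j, hj, rfl⟩ := hgF
    simp only [Set.mem_Iio] at hj
    have hj4 : 4 ≤ j := by
      by_contra hc
      interval_cases j <;> simp_all
    -- orthogonality: `f j` lies in no triangle avoiding `f 0` and `f 1`
    have horth : ∀ i, 1 ≤ i → 2 * i + 2 < k → 2 * i ≤ j → j ≤ 2 * i + 2 → False := by
      intro i hi hik hij hji
      apply orth ((hpar i).1 hik) hD (f j)
      ext v
      constructor
      · rintro ⟨hv1, hv2⟩
        rcases hv2 with rfl | rfl | hv2
        · rcases hv1 with h1 | h1 | h1 <;>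
            exact absurd h1 (hne _ _ (by omega) (by omega) (by omega))
        · rcases hv1 with h1 | h1 | h1 <;>
            exact absurd h1 (hne _ _ (by omega) (by omega) (by omega))
        · exact hv2
      · rintro rfl
        refine ⟨?_, by simp⟩
        have : j = 2 * i ∨ j = 2 * i + 1 ∨ j = 2 * i + 2 := by omega
        rcases this with rfl | rfl | rfl <;> simp
    obtain ⟨n, hn⟩ : ∃ n, k = 2 * n := by
      rcases Nat.even_or_odd' k with ⟨n, hn | hn⟩
      · exact ⟨n, hn⟩
      · exfalso
        exact horth ((j - 1) / 2) (by omega) (by omega) (by omega) (by omega)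
    have hjk : j = 2 * n - 1 := by
      by_contra hc
      exact horth ((j - 1) / 2) (by omega) (by omega) (by omega) (by omega)
    subst hn
    have hn3 : 3 ≤ n := by omega
    have h4 : 4 ≤ M.E.ncard := by omega
    have hMd := three_dual M hM
    -- ranks
    have rX : rk M (f '' Set.Iio (2 * (n - 1) + 1)) ≤ n - 1 + 1 := by
      apply rk_fan
      · intro i hi; exact (rk_single hM h4 (hE _ (by omega))).ge
      · intro i hi; exact (Triangle.rk ((hpar i).1 (by omega))).le
    have rco : ∀ m, m ≤ n - 1 → rk M✶ ((fun i => f (i + 1)) '' Set.Iio (2 * m + 1)) ≤ m + 1 := by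
      intro m hm
      apply rk_fan
      · intro i hi; exact (rk_single (M := M✶) hMd h4 (hE _ (by omega))).ge
      · intro i hi; exact (Triad.rk ((hpar i).2 (by omega))).le
    have rF : rk M✶ (f '' Set.Iio (2 * n)) ≤ n := by
      have q1 := rco (n - 1) le_rfl
      have q2 := rk_insert_triangle (M := M✶) (a := f 0) (b := f 1) (c := f j)
        (X := (fun i => f (i + 1)) '' Set.Iio (2 * (n - 1) + 1))
        ⟨0, by simp, rfl⟩
        ⟨j - 1, by simp only [Set.mem_Iio]; omega, by
          have : j - 1 + 1 = j := by omega
          simp only [this]⟩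
        (rk_pair (M := M✶) hMd h4 (hE 1 (by omega)) (hE j hj)
          (hne _ _ (by omega) (by omega) (by omega)))
        (Triad.rk hD).le
      have q3 : rk M✶ (f '' Set.Iio (2 * n)) ≤
          rk M✶ (insert (f 0) ((fun i => f (i + 1)) '' Set.Iio (2 * (n - 1) + 1))) := by
        apply rk_mono
        rintro _ ⟨i, hi, rfl⟩
        simp only [Set.mem_Iio] at hi
        rcases Nat.eq_zero_or_pos i with rfl | hi0
        · simp
        · right
          refine ⟨i - 1, by simp only [Set.mem_Iio]; omega, ?_⟩
          have : i - 1 + 1 = i := by omega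
          simp only [this]
      omega
    set X := f '' Set.Iio (2 * (n - 1) + 1) with hXdef
    have hXE : X ⊆ M.E := by
      rintro _ ⟨i, hi, rfl⟩
      simp only [Set.mem_Iio] at hi
      exact hE i (by omega)
    have hXn : X.ncard = 2 * n - 1 := by
      rw [hXdef, Set.InjOn.ncard_image (hinj.mono (Set.Iio_subset_Iio (by omega)))]
      simp; omega
    have rXd : rk M✶ X ≤ n := by
      refine (rk_mono M✶ ?_).trans rF
      exact Set.image_mono (Set.Iio_subset_Iio (by omega))
    have hcX : (M.E \ X).ncard ≤ 1 := by
      by_contra hc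
      have := two_le_lam hM hXE (by omega) (by omega)
      rw [lam_eq M hXE] at this
      omega
    have hcE := Set.ncard_sdiff_add_ncard_of_subset hXE M.ground_finite
    have hFE : f '' Set.Iio (2 * n) ⊆ M.E := by
      rintro _ ⟨i, hi, rfl⟩
      exact hE i hi
    have hFn : (f '' Set.Iio (2 * n)).ncard = 2 * n := by
      rw [Set.InjOn.ncard_image hinj]; simp
    have hEeq : f '' Set.Iio (2 * n) = M.E :=
      Set.eq_of_subset_of_ncard_le hFE (by omega) M.ground_finite
    have hEn : M.E.ncard = 2 * n := by rw [← hEeq, hFn]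
    -- rank of M
    have l1 := one_le_lam hM hXE (by omega) (by omega)
    have l2 := rk_le_ncard M (X := M.E \ X) (M.ground_finite.subset sdiff_subset)
    have rM : rk M M.E ≤ n := by
      unfold lam at l1
      omega
    have rMd := rk_dual M (X := M.E) subset_rfl
    have hZE : ({f (2 * n - 2), f (2 * n - 1), f 0} : Set α) ⊆ M.E := by
      rintro v (rfl | rfl | rfl)
      exacts [hE _ (by omega), hE _ (by omega), hE _ (by omega)]
    have rZ := rk_dual M✶ (X := {f (2 * n - 2), f (2 * n - 1), f 0}) hZE
    rw [Matroid.dual_dual, Matroid.dual_ground] at rZ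
    have hZn : ({f (2 * n - 2), f (2 * n - 1), f 0} : Set α).ncard = 3 := by
      rw [Set.ncard_eq_three]
      exact ⟨_, _, _, hne _ _ (by omega) (by omega) (by omega),
        hne _ _ (by omega) (by omega) (by omega), hne _ _ (by omega) (by omega) (by omega), rfl⟩
    have rW : rk M✶ (M.E \ {f (2 * n - 2), f (2 * n - 1), f 0}) ≤ n - 2 + 1 := by
      refine (rk_mono M✶ ?_).trans (rco (n - 2) (by omega))
      rintro v ⟨hv, hv'⟩
      rw [← hEeq] at hv
      obtain ⟨i, hi, rfl⟩ := hv
      simp only [Set.mem_Iio] at hi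
      have i1 : i ≠ 2 * n - 2 := by rintro rfl; simp at hv'
      have i2 : i ≠ 2 * n - 1 := by rintro rfl; simp at hv'
      have i3 : i ≠ 0 := by rintro rfl; simp at hv'
      refine ⟨i - 1, by simp only [Set.mem_Iio]; omega, ?_⟩
      have : i - 1 + 1 = i := by omega
      simp only [this]
    have hTlast : Triangle M {f (2 * n - 2), f (2 * n - 1), f 0} := by
      apply mk_triangle hM h4 (hE _ (by omega)) (hE _ (by omega)) (hE _ (by omega))
        (hne _ _ (by omega) (by omega) (by omega))
        (hne _ _ (by omega) (by omega) (by omega)) (hne _ _ (by omega) (by omega) (by omega))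
      omega
    subst hjk
    exact hW (fan_wheel (by omega) hinj hEeq (fun i hi => (hpar i).1 (by omega))
      (fun i hi => (hpar i).2 (by omega)) hTlast hDg)
  · -- extend the fan
    let fext : ℕ → α := fun i => Nat.casesOn i g f
    have hgne : ∀ i < k, f i ≠ g := by
      rintro i hi rfl
      exact hgF (hF ▸ ⟨i, hi, rfl⟩)
    have hfan : IsFanOrd M (k + 1) fext := by
      refine ⟨by omega, ?_, ?_, Or.inr hDg, ?_⟩
      · intro i hi j hj hij
        simp only [Set.mem_Iio] at hi hj
        rcases i with _ | i <;> rcases j with _ | j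
        · rfl
        · exact absurd hij.symm (hgne j (by omega))
        · exact absurd hij (hgne i (by omega))
        · rw [hinj (show i ∈ Set.Iio k by simp only [Set.mem_Iio]; omega)
            (show j ∈ Set.Iio k by simp only [Set.mem_Iio]; omega) hij]
      · intro i hi
        rcases i with _ | i
        · exact hg
        · exact hE i (by omega)
      · intro i hi
        rcases i with _ | i
        · exact ⟨fun h => (not_both hM h5 h hDg).elim, fun _ => hT⟩
        · exact hs i (by omega)
    have := hmax.2 (fext '' Set.Iio (k + 1)) ⟨k + 1, fext, hfan, rfl⟩ (by
      rw [hF]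
      rintro _ ⟨i, hi, rfl⟩
      simp only [Set.mem_Iio] at hi
      exact ⟨i + 1, by simp only [Set.mem_Iio]; omega, rfl⟩)
    apply hgF
    rw [← this]
    exact ⟨0, by simp, rfl⟩

lemma no_triad02 {M : Matroid α} [M.Finite] (hM : ThreeConnected M)
    (hW : ¬ IsWheelOrWhirl M) {F : Set α} (hmax : IsMaximalFan M F)
    {k : ℕ} {f : ℕ → α} (ho : IsFanOrd M k f) (hF : F = f '' Set.Iio k)
    (hk : 4 ≤ k) (hT : Triangle M {f 0, f 1, f 2}) {g : α} (hg : g ∈ M.E)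
    (g0 : g ≠ f 0) (g1 : g ≠ f 1) (g2 : g ≠ f 2) (g3 : g ≠ f 3)
    (hD : Triad M {f 0, f 2, g}) : False := by
  have h5 := five_le ho hk hg g0 g1 g2 g3
  have hpar := fan_parity ho hT
  obtain ⟨-, hinj, hE, -, hs⟩ := id ho
  have hne : ∀ i j, i < k → j < k → i ≠ j → f i ≠ f j := fun i j hi hj hij he =>
    hij (hinj hi hj he)
  have hD1 : Triad M {f 1, f 2, f 3} := (hpar 0).2 (by omega)
  by_cases hk5 : 5 ≤ k
  · have hT2 : Triangle M {f 2, f 3, f 4} := (hpar 1).1 (by omega)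
    have n02 := hne 0 2 (by omega) (by omega) (by omega)
    have n03 := hne 0 3 (by omega) (by omega) (by omega)
    have n04 := hne 0 4 (by omega) (by omega) (by omega)
    have n01 := hne 0 1 (by omega) (by omega) (by omega)
    have n12 := hne 1 2 (by omega) (by omega) (by omega)
    have n13 := hne 1 3 (by omega) (by omega) (by omega)
    have n14 := hne 1 4 (by omega) (by omega) (by omega)
    have n23 := hne 2 3 (by omega) (by omega) (by omega)
    have n24 := hne 2 4 (by omega) (by omega) (by omega)
    have n34 := hne 3 4 (by omega) (by omega) (by omega)
    have hg4 : g = f 4 := by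
      by_contra hc
      apply orth hT2 hD (f 2)
      ext v
      constructor
      · rintro ⟨hv1, rfl | rfl | rfl⟩
        · simp_all
        · rfl
        · simp_all
      · rintro rfl; simp
    subst hg4
    have h4 : 4 ≤ M.E.ncard := by omega
    have hMd := three_dual M hM
    set X : Set α := f '' Set.Iio 5 with hXdef
    have hXE : X ⊆ M.E := by
      rintro _ ⟨i, hi, rfl⟩
      simp only [Set.mem_Iio] at hi
      exact hE i (by omega)
    have hXn : X.ncard = 5 := by
      rw [hXdef, Set.InjOn.ncard_image (hinj.mono (Set.Iio_subset_Iio hk5))]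
      simp
    have rX : rk M X ≤ 3 := by
      apply rk_fan M f 2
      · intro i hi; exact (rk_single hM h4 (hE _ (by omega))).ge
      · intro i hi; exact (Triangle.rk ((hpar i).1 (by omega))).le
    have rXd : rk M✶ X ≤ 3 := by
      have q1 := rk_submod M✶ {f 1, f 2, f 3} {f 0, f 2, f 4}
      rw [Triad.rk hD, Triad.rk hD1] at q1
      have q2 : rk M✶ {f 2} ≤ rk M✶ ({f 1, f 2, f 3} ∩ {f 0, f 2, f 4}) :=
        rk_mono M✶ (by rintro _ rfl; simp)
      have q3 := rk_single (M := M✶) hMd h4 (x := f 2) (hE _ (by omega))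
      have q4 : rk M✶ X ≤ rk M✶ ({f 1, f 2, f 3} ∪ {f 0, f 2, f 4}) := by
        apply rk_mono
        rintro _ ⟨i, hi, rfl⟩
        simp only [Set.mem_Iio] at hi
        interval_cases i <;> simp
      omega
    have hcX : (M.E \ X).ncard ≤ 1 := by
      by_contra hc
      have := two_le_lam hM hXE (by omega) (by omega)
      rw [lam_eq M hXE] at this
      omega
    have hcE := Set.ncard_sdiff_add_ncard_of_subset hXE M.ground_finite
    -- rank at least three
    have hr3 : 3 ≤ rk M M.E := by
      have d1 := rk_dual M (X := {f 1, f 2, f 3}) hD1.1.1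
      rw [Triad.rk hD1, hD1.2] at d1
      have d2 := rk_pair hM h4 (hE 0 (by omega)) (hE 4 (by omega)) n04
      have d3 : rk M {f 0, f 4} ≤ rk M (M.E \ {f 1, f 2, f 3}) := by
        apply rk_mono
        rintro v (rfl | rfl)
        · exact ⟨hE 0 (by omega), by simp [n01, n02, n03]⟩
        · exact ⟨hE 4 (by omega), by simp [n14.symm, n24.symm, n34.symm]⟩
      omega
    have e1 := rk_dual M (X := M.E \ {f 2, f 3, f 4}) sdiff_subset
    rw [sdiff_sdiff_cancel_left hT2.1.1, Triangle.rk hT2] at e1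
    have e2 := Set.ncard_sdiff_add_ncard_of_subset hT2.1.1 M.ground_finite
    rw [hT2.2] at e2
    set Z := M.E \ {f 2, f 3, f 4} with hZ
    have z0 : f 0 ∈ Z := ⟨hE 0 (by omega), by simp [n02, n03, n04]⟩
    have z1 : f 1 ∈ Z := ⟨hE 1 (by omega), by simp [n12, n13, n14]⟩
    have e3 := rk_pair (M := M✶) hMd h4 (hE 0 (by omega)) (hE 1 (by omega)) n01
    have e4 : rk M✶ {f 0, f 1} ≤ rk M✶ Z :=
      rk_mono M✶ (by rintro v (rfl | rfl) <;> assumption)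
    have e5 : Z.ncard = 3 := by omega
    have hnot : ¬ Z ⊆ {f 0, f 1} := by
      intro hc
      have := Set.ncard_le_ncard hc (by simp)
      rw [Set.ncard_pair n01] at this
      omega
    obtain ⟨e, heZ, hen⟩ := Set.not_subset.1 hnot
    simp only [Set.mem_insert_iff, Set.mem_singleton_iff, not_or] at hen
    have hen' := heZ.2
    simp only [Set.mem_insert_iff, Set.mem_singleton_iff, not_or] at hen'
    have htri : Triad M {f 0, f 1, e} := by
      apply mk_triad hM h4 (hE 0 (by omega)) (hE 1 (by omega)) heZ.1 n01 (Ne.symm hen.1)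
        (Ne.symm hen.2)
      have : rk M✶ {f 0, f 1, e} ≤ rk M✶ Z :=
        rk_mono M✶ (by rintro v (rfl | rfl | rfl) <;> assumption)
      omega
    exact no_triad01 hM hW hmax ho hF hk hT heZ.1 hen.1 hen.2 hen'.1 hen'.2.1 htri
  · have hk4 : k = 4 := by omega
    subst hk4
    have hDg : Triad M {g, f 0, f 2} := by
      have : ({g, f 0, f 2} : Set α) = {f 0, f 2, g} := by ext; simp; tauto
      rwa [this]
    have hT' : Triangle M {f 0, f 2, f 1} := by rwa [Set.pair_comm (f 2) (f 1)]
    have hD1' : Triad M {f 2, f 1, f 3} := by rwa [Set.insert_comm (f 2) (f 1)]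
    have hgF : g ∉ F := by
      rw [hF]
      rintro ⟨j, hj, rfl⟩
      simp only [Set.mem_Iio] at hj
      interval_cases j <;> simp_all
    let fext : ℕ → α := fun i => match i with
      | 0 => g
      | 1 => f 0
      | 2 => f 2
      | 3 => f 1
      | _ => f 3
    have n02 := hne 0 2 (by omega) (by omega) (by omega)
    have n03 := hne 0 3 (by omega) (by omega) (by omega)
    have n01 := hne 0 1 (by omega) (by omega) (by omega)
    have n12 := hne 1 2 (by omega) (by omega) (by omega)
    have n13 := hne 1 3 (by omega) (by omega) (by omega)
    have n23 := hne 2 3 (by omega) (by omega) (by omega)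
    have hfan : IsFanOrd M 5 fext := by
      refine ⟨by omega, ?_, ?_, Or.inr hDg, ?_⟩
      · intro i hi j hj hij
        simp only [Set.mem_Iio] at hi hj
        interval_cases i <;> interval_cases j <;> first
          | rfl
          | (exfalso; simp only [fext] at hij; first | exact absurd hij (by assumption) | exact absurd hij.symm (by assumption))
      · intro i hi
        interval_cases i
        · exact hg
        all_goals exact hE _ (by omega)
      · intro i hi
        have : i = 0 ∨ i = 1 := by omega
        rcases this with rfl | rfl
        · exact ⟨fun h => (not_both hM h5 h hDg).elim, fun _ => hT'⟩
        · exact ⟨fun _ => hD1', fun h => (not_both hM h5 hT' h).elim⟩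
    have := hmax.2 (fext '' Set.Iio 5) ⟨5, fext, hfan, rfl⟩ (by
      rw [hF]
      rintro _ ⟨i, hi, rfl⟩
      simp only [Set.mem_Iio] at hi
      interval_cases i
      · exact ⟨1, by simp, rfl⟩
      · exact ⟨3, by simp, rfl⟩
      · exact ⟨2, by simp, rfl⟩
      · exact ⟨4, by simp, rfl⟩)
    apply hgF
    rw [← this]
    exact ⟨0, by simp, rfl⟩

lemma spoke {M : Matroid α} [M.Finite] (hM : ThreeConnected M)
    (hW : ¬ IsWheelOrWhirl M) {F : Set α} (hmax : IsMaximalFan M F)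
    {k : ℕ} {f : ℕ → α} (ho : IsFanOrd M k f) (hF : F = f '' Set.Iio k)
    (hk : 4 ≤ k) (hT : Triangle M {f 0, f 1, f 2}) : ThreeConnected (NDP.delete M {f 0}) := by
  by_contra hn
  have hinj := ho.2.1
  have hne : ∀ i j, i < k → j < k → i ≠ j → f i ≠ f j := fun i j hi hj hij he =>
    hij (hinj hi hj he)
  have h4 : 4 ≤ M.E.ncard := by
    have h4 : (f '' Set.Iio 4).ncard = 4 := by
      rw [Set.InjOn.ncard_image (hinj.mono (Set.Iio_subset_Iio hk))]
      simp
    rw [← h4]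
    apply Set.ncard_le_ncard _ M.ground_finite
    rintro _ ⟨j, hj, rfl⟩
    exact ho.2.2.1 j (lt_of_lt_of_le hj hk)
  have hD : Triad M {f 1, f 2, f 3} := (fan_parity ho hT 0).2 (by omega)
  obtain ⟨g, hg, g0, g1, g2, g3, h | h⟩ := triad_of_not_three hM h4 hT hD
    (hne _ _ (by omega) (by omega) (by omega)) (hne _ _ (by omega) (by omega) (by omega))
    (hne _ _ (by omega) (by omega) (by omega)) (hne _ _ (by omega) (by omega) (by omega)) hn
  · exact no_triad01 hM hW hmax ho hF hk hT hg g0 g1 g2 g3 h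
  · exact no_triad02 hM hW hmax ho hF hk hT hg g0 g1 g2 g3 h

lemma fanOrd_dual {M : Matroid α} {k : ℕ} {f : ℕ → α} (h : IsFanOrd M k f) : IsFanOrd M✶ k f := by
  obtain ⟨h1, h2, h3, h4, h5⟩ := h
  refine ⟨h1, h2, h3, ?_, ?_⟩
  · rw [triad_dual, triangle_dual]; exact h4.symm
  · intro i hi
    simp only [triad_dual, triangle_dual]
    exact (h5 i hi).symm

lemma fan_dual {M : Matroid α} {F : Set α} (h : IsFan M F) : IsFan M✶ F := by
  obtain ⟨k, f, h1, h2⟩ := h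
  exact ⟨k, f, fanOrd_dual h1, h2⟩

lemma maxfan_dual {M : Matroid α} {F : Set α} (h : IsMaximalFan M F) : IsMaximalFan M✶ F := by
  refine ⟨fan_dual h.1, fun F' hF' hsub => h.2 F' ?_ hsub⟩
  have := fan_dual hF'
  rwa [Matroid.dual_dual] at this

lemma wheel_dual {M : Matroid α} (h : IsWheelOrWhirl M) : IsWheelOrWhirl M✶ := by
  obtain ⟨n, s, r, hn, hinj, hE, ht⟩ := h
  refine ⟨n, r, fun i => s (i + 1), hn, ?_, ?_, ?_⟩
  · rintro ⟨i, b⟩ ⟨j, c⟩ hij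
    have key : ((if b then i else i + 1, !b) : ZMod n × Bool) = (if c then j else j + 1, !c) := by
      apply hinj
      cases b <;> cases c <;> simpa using hij
    cases b <;> cases c <;> simp_all
  · rw [Matroid.dual_ground, ← hE, Set.union_comm]
    congr 1
    exact (Equiv.addRight (1 : ZMod n)).surjective.range_comp s
  · intro i
    rw [triad_dual, triangle_dual]
    exact ⟨(ht i).2, (ht (i + 1)).1⟩

end NDPAux



/-- Ends of a maximal fan with at least four elements in a
3-connected matroid that is not a wheel or a whirl: if the end is a spoke
(the initial triple of its fan ordering is a triangle) then deleting it keeps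
3-connectedness; if it is a rim (the initial triple is a triad) then contracting
it keeps 3-connectedness.  (Quantifying over all fan orderings of `F` covers
both ends of the fan.) -/
theorem stmt19 (M : Matroid α) [M.Finite] (hM : NDP.ThreeConnected M)
    (hW : ¬ NDP.IsWheelOrWhirl M) (F : Set α) (hmax : NDP.IsMaximalFan M F)
    (k : ℕ) (f : ℕ → α) (hord : NDP.IsFanOrd M k f) (hF : F = f '' Set.Iio k)
    (hk : 4 ≤ k) :
    (NDP.Triangle M {f 0, f 1, f 2} → NDP.ThreeConnected (NDP.delete M {f 0})) ∧
    (NDP.Triad M {f 0, f 1, f 2} → NDP.ThreeConnected (NDP.contract M {f 0})) := by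
  refine ⟨fun h => NDPAux.spoke hM hW hmax hord hF hk h, fun h => ?_⟩
  have hW' : ¬ NDP.IsWheelOrWhirl M✶ := fun hw => hW (by
    have := NDPAux.wheel_dual hw
    rwa [Matroid.dual_dual] at this)
  have h1 := NDPAux.spoke (M := M✶) (NDPAux.three_dual M hM) hW' (NDPAux.maxfan_dual hmax)
    (NDPAux.fanOrd_dual hord) hF hk ((NDPAux.triangle_dual M _).2 h)
  have : (NDP.delete M✶ {f 0}).Finite :=
    Matroid.restrict_finite (M✶.ground_finite.subset sdiff_subset)
  exact NDPAux.three_dual _ h1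
end
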